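/- Let A ⊂ ℝ² be a finite point set in general position whose convex hull is two-dimensional and let p ∈ A be an interior point of A. For every integer i ≥ 3, the number of triangulations of A in which p has degree i is at most (C_{i−1} − C_{i−2}) times the number of triangulations of A∖{p}, where C_m denotes the m-th Catalan number. -/

import Mathlib

/-!
A triangulation in which `p` has degree `i = n + 3` is encoded injectively by a triangulation of
`A.erase p` together with three binary trees having `n` nodes in total.

If `p` has degree at least four, the union of the triangles at `p` is a polygon that is star-shaped
around `p`, and some edge `pv` at `p` can be flipped: with `u` and `w` the neighbours of `p` before
and after `v`, the quadrilateral `puvw` is strictly convex (`exists_flip`,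
`IsTri.exists_flippable`). Flipping `pv` to `uw` lowers the degree of `p` by one
(`IsTri.flip`, `IsTri.flip_star`). When the degree is three, `p` is removed and the triangle `abc`
of its neighbours is put in place of its star (`IsTri.remove`), which gives a triangulation `𝒯'`
of `A.erase p`.

To undo this, start from the triangle `abc` of `𝒯'` around `p` and undo the flips. Undoing a flip
pushes the star of `p` across an edge `uw` on its boundary into the adjacent triangle `uvw`, which
is a triangle of `𝒯'`. Hence the star of `p` in the original triangulation is obtained from `abc`
by crossing edges repeatedly, starting at the three sides of `abc`; which edges are crossed is
recorded by one binary tree per side, with one node per flip (`leaves`, `removed`, `Encodes`,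
`exists_encodes`). Outside of the star nothing changes, so the original triangulation is
determined by `𝒯'` and the trees (`Encodes.eq`).

The number of triples of binary trees with `n` nodes in total is `C (n + 2) - C (n + 1)`
(`card_shapes_le`).

On the geometric side a triangulation is handled as its set of triangles (`IsTri`). In general
position, triangles that cover the hull and have disjoint interiors form a simplicial complex
(`tri_inter_subset`, `IsTri.toComplex`), and a triangulation is determined by its triangles
(`IsTriangulation.mem_faces_iff`).
-/

open Geometry
open scoped Classical

/-- The Euclidean plane `ℝ²`. -/
abbrev Plane : Type := EuclideanSpace ℝ (Fin 2)

/-- A triangulation of a finite point set `A ⊆ ℝ²` (whose convex hull is two-dimensional):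
a geometric simplicial complex all of whose faces have at most 3 elements, whose underlying
space is the convex hull of `A`, and whose vertex set is exactly `A`. -/
def IsTriangulation (A : Finset Plane) (T : SimplicialComplex ℝ Plane) : Prop :=
  (∀ s ∈ T.faces, s.card ≤ 3) ∧
  T.space = convexHull ℝ (A : Set Plane) ∧
  T.vertices = (A : Set Plane)

/-- The degree of a vertex `p` in a triangulation `T`: the number of edges
(faces with exactly 2 elements) of `T` containing `p`. -/
noncomputable def degree (T : SimplicialComplex ℝ Plane) (p : Plane) : ℕ :=
  Nat.card {s : Finset Plane | s ∈ T.faces ∧ s.card = 2 ∧ p ∈ s}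

/-- A finite point set is in general position if no three of its points are collinear. -/
def InGeneralPosition (A : Finset Plane) : Prop :=
  ∀ x ∈ A, ∀ y ∈ A, ∀ z ∈ A, x ≠ y → y ≠ z → x ≠ z →
    ¬ Collinear ℝ ({x, y, z} : Set Plane)

/-! ### Orientation of point triples -/

/-- Twice the signed area of the triangle `abc`: positive iff `a`, `b`, `c` are in
counterclockwise order, zero iff they are collinear. -/
def orient (a b c : Plane) : ℝ :=
  (b 0 - a 0) * (c 1 - a 1) - (b 1 - a 1) * (c 0 - a 0)

lemma orient_rot (a b c : Plane) : orient b c a = orient a b c := by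
  unfold orient; ring

lemma orient_swap (a b c : Plane) : orient a c b = - orient a b c := by
  unfold orient; ring

lemma orient_self₁ (a b : Plane) : orient a a b = 0 := by unfold orient; ring
lemma orient_self₂ (a b : Plane) : orient a b b = 0 := by unfold orient; ring
lemma orient_self₃ (a b : Plane) : orient a b a = 0 := by unfold orient; ring

/-- `orient a b` is an affine function of its last argument. -/
lemma orient_comb (a b x y : Plane) (s t : ℝ) (h : s + t = 1) :
    orient a b (s • x + t • y) = s * orient a b x + t * orient a b y := by
  obtain rfl : t = 1 - s := by linarith
  simp only [orient, PiLp.add_apply, PiLp.smul_apply, smul_eq_mul]; ring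

@[fun_prop]
lemma continuous_orient (a b : Plane) : Continuous (orient a b) := by
  unfold orient; fun_prop

lemma convex_orient_nonneg (a b : Plane) : Convex ℝ {x | 0 ≤ orient a b x} := by
  intro x hx y hy s t hs ht h
  simp only [Set.mem_ofPred_eq] at *
  rw [orient_comb _ _ _ _ _ _ h]; positivity

lemma collinear_of_orient_eq_zero {a b c : Plane} (h : orient a b c = 0) :
    Collinear ℝ ({a, b, c} : Set Plane) := by
  by_cases hab : a = b
  · subst hab; simpa using collinear_pair ℝ a c
  rw [collinear_iff_of_mem (p₀ := a) (by simp)]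
  refine ⟨b - a, ?_⟩
  simp only [Set.mem_insert_iff, Set.mem_singleton_iff, forall_eq_or_imp, forall_eq, vadd_eq_add]
  refine ⟨⟨0, by simp⟩, ⟨1, by simp⟩, ?_⟩
  unfold orient at h
  by_cases h0 : b 0 - a 0 = 0
  · have h1 : b 1 - a 1 ≠ 0 := by
      intro h1; apply hab; ext i; fin_cases i
      · exact (sub_eq_zero.1 h0).symm
      · exact (sub_eq_zero.1 h1).symm
    refine ⟨(c 1 - a 1) / (b 1 - a 1), ?_⟩
    ext i; fin_cases i
    · simp [h0] at h ⊢; rcases h with h | h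
      · exact absurd h h1
      · linarith
    · simp; field_simp; ring
  · refine ⟨(c 0 - a 0) / (b 0 - a 0), ?_⟩
    ext i; fin_cases i
    · simp; field_simp; ring
    · simp; field_simp; linarith

lemma not_collinear_of_orient {a b c : Plane} (h : orient a b c ≠ 0) :
    ¬ Collinear ℝ ({a, b, c} : Set Plane) := by
  intro hc
  rw [collinear_iff_of_mem (p₀ := a) (by simp)] at hc
  obtain ⟨v, hv⟩ := hc
  simp only [Set.mem_insert_iff, Set.mem_singleton_iff, forall_eq_or_imp, forall_eq,
    vadd_eq_add] at hv
  obtain ⟨-, ⟨r, hr⟩, ⟨s, hs⟩⟩ := hv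
  apply h
  rw [hr, hs]; simp [orient]; ring

lemma affineIndependent_of_orient {a b c : Plane} (h : orient a b c ≠ 0) :
    AffineIndependent ℝ ((↑) : ({a, b, c} : Finset Plane) → Plane) := by
  have h1 := (affineIndependent_iff_not_collinear_set (k := ℝ)).2 (not_collinear_of_orient h)
  have h2 := h1.range
  have : Set.range ![a, b, c] = (({a, b, c} : Finset Plane) : Set Plane) := by
    simp [Matrix.range_cons, Set.insert_comm, Set.union_comm]
    ext; simp; tauto
  rw [this] at h2
  exact h2

/-- A counterclockwise triangle is the intersection of its three left half-planes. -/
lemma mem_tri_iff {a b c : Plane} (h : 0 < orient a b c) (x : Plane) :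
    x ∈ convexHull ℝ ({a, b, c} : Set Plane) ↔
      0 ≤ orient a b x ∧ 0 ≤ orient b c x ∧ 0 ≤ orient c a x := by
  constructor
  · intro hx
    refine ⟨convexHull_min ?_ (convex_orient_nonneg a b) hx,
      convexHull_min ?_ (convex_orient_nonneg b c) hx,
      convexHull_min ?_ (convex_orient_nonneg c a) hx⟩ <;>
    · rintro y (rfl | rfl | rfl) <;>
      · rw [Set.mem_ofPred_eq]
        unfold orient at *
        linarith
  · rintro ⟨h1, h2, h3⟩
    have hs : orient a b x + orient b c x + orient c a x = orient a b c := by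
      unfold orient; ring
    have key : x = (orient b c x / orient a b c) • a + (orient c a x / orient a b c) • b
        + (orient a b x / orient a b c) • c := by
      ext i
      have h' := h.ne'
      fin_cases i
      · simp; field_simp; unfold orient; ring
      · simp; field_simp; unfold orient; ring
    rw [key]
    have hC := convex_convexHull ℝ ({a, b, c} : Set Plane)
    have hsub := subset_convexHull ℝ ({a, b, c} : Set Plane)
    have := hC.sum_mem (t := Finset.univ)
      (w := ![orient b c x / orient a b c, orient c a x / orient a b c, orient a b x / orient a b c])
      (z := ![a, b, c]) ?_ ?_ ?_
    · simpa [Fin.sum_univ_three] using this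
    · intro i _; fin_cases i <;> simp <;> positivity
    · simp [Fin.sum_univ_three]; field_simp; linarith
    · intro i _; fin_cases i <;> apply hsub <;> simp

lemma mem_interior_tri {a b c x : Plane} (h1 : 0 < orient a b x) (h2 : 0 < orient b c x)
    (h3 : 0 < orient c a x) : x ∈ interior (convexHull ℝ ({a, b, c} : Set Plane)) := by
  have hs : orient a b x + orient b c x + orient c a x = orient a b c := by
    unfold orient; ring
  have h : 0 < orient a b c := by linarith
  refine mem_interior.2 ⟨{x | 0 < orient a b x} ∩ {x | 0 < orient b c x} ∩ {x | 0 < orient c a x},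
    ?_, ?_, ⟨⟨h1, h2⟩, h3⟩⟩
  · rintro y ⟨⟨g1, g2⟩, g3⟩
    exact (mem_tri_iff h y).2 ⟨g1.le, g2.le, g3.le⟩
  · have := fun a b => isOpen_lt continuous_const (continuous_orient a b) (f := fun _ => (0:ℝ))
    exact ((this a b).inter (this b c)).inter (this c a)

lemma interior_tri_nonempty {a b c : Plane} (h : 0 < orient a b c) :
    (interior (convexHull ℝ ({a, b, c} : Set Plane))).Nonempty := by
  refine ⟨(1/3 : ℝ) • a + (1/3 : ℝ) • b + (1/3 : ℝ) • c, mem_interior_tri ?_ ?_ ?_⟩ <;>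
  · simp only [orient, PiLp.add_apply, PiLp.smul_apply, smul_eq_mul] at *; linarith

/-- If the interiors of `s` and of a convex set `t` with nonempty interior are disjoint, then the
interior of `s` misses all of `t`, since `t` lies in the closure of its interior. -/
lemma disjoint_interior_of_disjoint {s t : Set Plane} (ht : Convex ℝ t)
    (hne : (interior t).Nonempty) (h : Disjoint (interior s) (interior t)) :
    Disjoint (interior s) t := by
  have := h.closure_right isOpen_interior
  rw [ht.closure_interior_eq_closure_of_nonempty_interior hne] at this
  exact this.mono_right subset_closure

lemma interior_eq_empty_of_card {s : Finset Plane} (hs : s.card ≤ 2) :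
    interior (convexHull ℝ (s : Set Plane)) = ∅ := by
  by_contra hne
  have h1 := interior_convexHull_nonempty_iff_affineSpan_eq_top.1 (Set.nonempty_iff_ne_empty.2 hne)
  have h2 : vectorSpan ℝ (s : Set Plane) = ⊤ := by
    rw [← direction_affineSpan, h1]; simp
  have hsn : s.Nonempty := by
    rw [Finset.nonempty_iff_ne_empty]; rintro rfl; simp at hne
  have h3 := finrank_vectorSpan_image_finset_le ℝ (id : Plane → Plane) s (n := s.card - 1)
    (by have := hsn.card_pos; omega)
  rw [Finset.image_id] at h3
  rw [h2, finrank_top, finrank_euclideanSpace_fin] at h3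
  omega

/-- A point of `convexHull ℝ t` where a linear functional attains its maximum `u` over `t` is in
the hull of the points of `t` at which the functional equals `u`. -/
lemma mem_convexHull_filter {t : Finset Plane} (f : Plane →L[ℝ] ℝ) (u : ℝ)
    (hf : ∀ y ∈ t, f y ≤ u) {x : Plane} (hx : x ∈ convexHull ℝ (t : Set Plane)) (hxu : f x = u) :
    x ∈ convexHull ℝ ((t.filter fun y => f y = u : Finset Plane) : Set Plane) := by
  rw [Finset.mem_convexHull'] at hx ⊢
  obtain ⟨w, hw0, hw1, hwx⟩ := hx
  have hz : ∀ y ∈ t, f y ≠ u → w y = 0 := by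
    have h0 : ∑ y ∈ t, w y * (u - f y) = 0 := by
      simp only [mul_sub, Finset.sum_sub_distrib, ← Finset.sum_mul, hw1]
      rw [← hxu, ← hwx]; simp
    rw [Finset.sum_eq_zero_iff_of_nonneg] at h0
    · intro y hy hne
      rcases mul_eq_zero.1 (h0 y hy) with h | h
      · exact h
      · exact absurd (by linarith) hne
    · intro y hy
      exact mul_nonneg (hw0 y hy) (by linarith [hf y hy])
  refine ⟨w, fun y hy => hw0 y (Finset.mem_filter.1 hy).1, ?_, ?_⟩
  · rw [← hw1, Finset.sum_filter_of_ne]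
    intro y hy h; by_contra h'; exact h (hz y hy h')
  · rw [← hwx, Finset.sum_filter_of_ne]
    intro y hy h; by_contra h'; exact h (by rw [hz y hy h', zero_smul])

/-- Three points on a common level line of a nonzero linear functional are collinear. -/
lemma orient_eq_zero_of_level {f : Plane →L[ℝ] ℝ} (hf : f ≠ 0) {u : ℝ} {a b c : Plane}
    (ha : f a = u) (hb : f b = u) (hc : f c = u) : orient a b c = 0 := by
  have hform : ∀ x : Plane, f x = x 0 * f (EuclideanSpace.single 0 1) +
      x 1 * f (EuclideanSpace.single 1 1) := by
    intro x
    have : x = x 0 • EuclideanSpace.single 0 (1:ℝ) + x 1 • EuclideanSpace.single 1 (1:ℝ) := by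
      ext i; fin_cases i <;> simp
    conv_lhs => rw [this]
    simp
  set α := f (EuclideanSpace.single 0 1)
  set β := f (EuclideanSpace.single 1 1)
  rw [hform] at ha hb hc
  have h1 : α * orient a b c = 0 := by
    unfold orient
    linear_combination (c 1 - a 1) * (hb - ha) - (b 1 - a 1) * (hc - ha)
  have h2 : β * orient a b c = 0 := by
    unfold orient
    linear_combination -(c 0 - a 0) * (hb - ha) + (b 0 - a 0) * (hc - ha)
  by_contra hne
  have hα : α = 0 := by simpa [hne] using h1
  have hβ : β = 0 := by simpa [hne] using h2
  apply hf; ext x; rw [hform]; simp [hα, hβ]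

lemma card_three_ccw {A t : Finset Plane} (hgen : InGeneralPosition A) (ht : t ⊆ A)
    (h3 : t.card = 3) : ∃ a b c, t = {a, b, c} ∧ 0 < orient a b c := by
  obtain ⟨a, b, c, hab, hac, hbc, rfl⟩ := Finset.card_eq_three.1 h3
  have hne : orient a b c ≠ 0 := fun h => hgen a (ht (by simp)) b (ht (by simp)) c (ht (by simp))
    hab hbc hac (collinear_of_orient_eq_zero h)
  rcases lt_or_gt_of_ne hne with h | h
  · exact ⟨a, c, b, by ext; simp; tauto, by rw [orient_swap]; linarith⟩
  · exact ⟨a, b, c, rfl, h⟩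

lemma orient_ne_zero {A : Finset Plane} (hgen : InGeneralPosition A) {a b c : Plane}
    (ha : a ∈ A) (hb : b ∈ A) (hc : c ∈ A) (hab : a ≠ b) (hbc : b ≠ c) (hac : a ≠ c) :
    orient a b c ≠ 0 :=
  fun h => hgen a ha b hb c hc hab hbc hac (collinear_of_orient_eq_zero h)

lemma interior_nonempty_of_card_three {A t : Finset Plane} (hgen : InGeneralPosition A)
    (ht : t ⊆ A) (h3 : t.card = 3) : (interior (convexHull ℝ (t : Set Plane))).Nonempty := by
  obtain ⟨a, b, c, rfl, h⟩ := card_three_ccw hgen ht h3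
  simpa using interior_tri_nonempty h

/-- In general position, two triangles with disjoint interiors meet only in the hull of their
common vertices: a separating line carries at most two points of `A`. This is what turns an
interior-disjoint family of triangles into a simplicial complex. -/
lemma tri_inter_subset {A s t : Finset Plane} (hgen : InGeneralPosition A) (hs : s ⊆ A)
    (ht : t ⊆ A) (hs3 : s.card = 3) (ht3 : t.card = 3)
    (hd : Disjoint (interior (convexHull ℝ (s : Set Plane)))
      (interior (convexHull ℝ (t : Set Plane)))) :
    convexHull ℝ (s : Set Plane) ∩ convexHull ℝ (t : Set Plane) ⊆
      convexHull ℝ ((s ∩ t : Finset Plane) : Set Plane) := by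
  have hsn := interior_nonempty_of_card_three hgen hs hs3
  have htn := interior_nonempty_of_card_three hgen ht ht3
  have hd' := disjoint_interior_of_disjoint (convex_convexHull ℝ _) htn hd
  obtain ⟨f, u, hfs, hft⟩ := geometric_hahn_banach_open (convex_convexHull ℝ _).interior
    isOpen_interior (convex_convexHull ℝ (t : Set Plane)) hd'
  have hf0 : f ≠ 0 := by
    rintro rfl
    obtain ⟨x, hx⟩ := hsn
    obtain ⟨y, hy⟩ := htn
    have h1 := hfs x hx
    have h2 := hft y (interior_subset hy)
    simp at h1 h2; linarith
  have hfs' : ∀ x ∈ convexHull ℝ (s : Set Plane), f x ≤ u := by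
    intro x hx
    have h1 : x ∈ closure (interior (convexHull ℝ (s : Set Plane))) := by
      rw [(convex_convexHull ℝ _).closure_interior_eq_closure_of_nonempty_interior hsn]
      exact subset_closure hx
    exact closure_minimal (fun y hy => (hfs y hy).le) (isClosed_le f.continuous continuous_const) h1
  rintro x ⟨hxs, hxt⟩
  have hxu : f x = u := le_antisymm (hfs' x hxs) (hft x hxt)
  have hx1 := mem_convexHull_filter f u (fun y hy => hfs' y (subset_convexHull ℝ _ hy)) hxs hxu
  have hx2 := mem_convexHull_filter (-f) (-u)
    (fun y hy => by simpa using hft y (subset_convexHull ℝ _ hy)) hxt (by simpa using hxu)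
  simp only [neg_apply, neg_inj] at hx2
  set s' := s.filter fun y => f y = u
  set t' := t.filter fun y => f y = u
  have hcard : (s' ∪ t').card ≤ 2 := by
    by_contra! h
    obtain ⟨a, ha, b, hb, c, hc, hab, hac, hbc⟩ := Finset.two_lt_card.1 h
    have hmem : ∀ y ∈ s' ∪ t', y ∈ A ∧ f y = u := by
      intro y hy
      rcases Finset.mem_union.1 hy with hy | hy <;> rw [Finset.mem_filter] at hy
      · exact ⟨hs hy.1, hy.2⟩
      · exact ⟨ht hy.1, hy.2⟩
    exact orient_ne_zero hgen (hmem a ha).1 (hmem b hb).1 (hmem c hc).1 hab hbc hac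
      (orient_eq_zero_of_level hf0 (hmem a ha).2 (hmem b hb).2 (hmem c hc).2)
  have hsub : s' ∩ t' ⊆ s ∩ t :=
    Finset.inter_subset_inter (Finset.filter_subset _ _) (Finset.filter_subset _ _)
  refine convexHull_mono (Finset.coe_subset.2 hsub) ?_
  by_cases h1 : s' ⊆ t'
  · rwa [Finset.inter_eq_left.2 h1]
  by_cases h2 : t' ⊆ s'
  · rwa [Finset.inter_eq_right.2 h2]
  obtain ⟨a, ha, ha'⟩ := Finset.not_subset.1 h1
  obtain ⟨b, hb, hb'⟩ := Finset.not_subset.1 h2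
  -- with at most two points on the line, both traces are single and distinct vertices
  have e1 : s' = {a} := by
    refine Finset.eq_singleton_iff_unique_mem.2 ⟨ha, fun y hy => ?_⟩
    by_contra hya
    have hsub3 : ({y, a, b} : Finset Plane) ⊆ s' ∪ t' := by
      clear_value s' t'
      intro z hz; simp only [Finset.mem_insert, Finset.mem_singleton] at hz
      rw [Finset.mem_union]; rcases hz with rfl | rfl | rfl <;> tauto
    have : ({y, a, b} : Finset Plane).card ≤ 2 :=
      (Finset.card_le_card hsub3).trans hcard
    rw [Finset.card_eq_three.2 ⟨y, a, b, hya, by rintro rfl; exact hb' hy,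
      by rintro rfl; exact ha' hb, rfl⟩] at this
    omega
  have e2 : t' = {b} := by
    refine Finset.eq_singleton_iff_unique_mem.2 ⟨hb, fun y hy => ?_⟩
    by_contra hya
    have hsub3 : ({y, a, b} : Finset Plane) ⊆ s' ∪ t' := by
      clear_value s' t'
      intro z hz; simp only [Finset.mem_insert, Finset.mem_singleton] at hz
      rw [Finset.mem_union]; rcases hz with rfl | rfl | rfl <;> tauto
    have : ({y, a, b} : Finset Plane).card ≤ 2 :=
      (Finset.card_le_card hsub3).trans hcard
    rw [Finset.card_eq_three.2 ⟨y, a, b, by rintro rfl; exact ha' hy, hya,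
      by rintro rfl; exact ha' hb, rfl⟩] at this
    omega
  rw [e1] at hx1; rw [e2] at hx2
  simp only [Finset.coe_singleton, convexHull_singleton, Set.mem_singleton_iff] at hx1 hx2
  exact absurd (show b ∈ s' by rw [← hx2, hx1]; exact ha) hb'

/-! ### Triangulations as sets of triangles -/

/-- `𝒯` is the set of triangles of a triangulation of `A`. Triangles are 3-element subsets of `A`;
disjointness is asked of interiors only, and by general position they then meet face to face
(`IsTri.inter`). The field `vert` says that every point of `A` is a vertex. -/
structure IsTri (A : Finset Plane) (𝒯 : Finset (Finset Plane)) : Prop where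
  sub : ∀ t ∈ 𝒯, t ⊆ A
  card : ∀ t ∈ 𝒯, t.card = 3
  cover : ∀ x ∈ convexHull ℝ (A : Set Plane), ∃ t ∈ 𝒯, x ∈ convexHull ℝ (t : Set Plane)
  disj : ∀ s ∈ 𝒯, ∀ t ∈ 𝒯, s ≠ t → Disjoint (interior (convexHull ℝ (s : Set Plane)))
    (interior (convexHull ℝ (t : Set Plane)))
  vert : ∀ a ∈ A, ∃ t ∈ 𝒯, a ∈ t

namespace IsTri

variable {A : Finset Plane} {𝒯 : Finset (Finset Plane)}

lemma inter (h : IsTri A 𝒯) (hgen : InGeneralPosition A) {s t : Finset Plane}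
    (hs : s ∈ 𝒯) (ht : t ∈ 𝒯) :
    convexHull ℝ (s : Set Plane) ∩ convexHull ℝ (t : Set Plane) ⊆
      convexHull ℝ ((s ∩ t : Finset Plane) : Set Plane) := by
  by_cases hst : s = t
  · subst hst; simp
  · exact tri_inter_subset hgen (h.sub s hs) (h.sub t ht) (h.card s hs) (h.card t ht)
      (h.disj s hs t ht hst)

lemma eq_of_mem_interior (h : IsTri A 𝒯) {s t : Finset Plane}
    (hs : s ∈ 𝒯) (ht : t ∈ 𝒯) {x : Plane} (hxs : x ∈ interior (convexHull ℝ (s : Set Plane)))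
    (hxt : x ∈ interior (convexHull ℝ (t : Set Plane))) : s = t := by
  by_contra hst
  exact Set.disjoint_left.1 (h.disj s hs t ht hst) hxs hxt

lemma disj' (h : IsTri A 𝒯) (hgen : InGeneralPosition A) {s t : Finset Plane}
    (hs : s ∈ 𝒯) (ht : t ∈ 𝒯) (hst : s ≠ t) :
    Disjoint (interior (convexHull ℝ (s : Set Plane))) (convexHull ℝ (t : Set Plane)) :=
  disjoint_interior_of_disjoint (convex_convexHull ℝ _)
    (interior_nonempty_of_card_three hgen (h.sub t ht) (h.card t ht)) (h.disj s hs t ht hst)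

/-- On each side of a directed edge `ab` there is at most one triangle of `𝒯`. -/
lemma same_side (h : IsTri A 𝒯) {a b c d : Plane} (hc : {a, b, c} ∈ 𝒯) (hd : {a, b, d} ∈ 𝒯)
    (oc : 0 < orient a b c) (od : 0 < orient a b d) : c = d := by
  -- points just off the midpoint of `ab` in the direction of `c` lie inside both triangles
  have key : ∀ e : Plane, 0 < orient a b e → ∀ᶠ δ : ℝ in nhdsWithin 0 (Set.Ioi 0),
      ((1 - δ) • ((1/2 : ℝ) • a + (1/2 : ℝ) • b) + δ • c) ∈
        interior (convexHull ℝ ({a, b, e} : Set Plane)) := by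
    intro e he
    have h1 : ∀ᶠ δ : ℝ in nhdsWithin 0 (Set.Ioi 0),
        0 < orient b e ((1 - δ) • ((1/2 : ℝ) • a + (1/2 : ℝ) • b) + δ • c) := by
      apply Filter.Eventually.filter_mono nhdsWithin_le_nhds
      have hcont : Continuous fun δ : ℝ =>
        orient b e ((1 - δ) • ((1/2 : ℝ) • a + (1/2 : ℝ) • b) + δ • c) :=
        (continuous_orient b e).comp (by fun_prop)
      refine hcont.continuousAt.eventually_const_lt ?_
      beta_reduce
      rw [orient_comb _ _ _ _ _ _ (by ring), orient_comb _ _ _ _ _ _ (by ring), orient_self₃,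
        orient_rot]
      linarith
    have h2 : ∀ᶠ δ : ℝ in nhdsWithin 0 (Set.Ioi 0),
        0 < orient e a ((1 - δ) • ((1/2 : ℝ) • a + (1/2 : ℝ) • b) + δ • c) := by
      apply Filter.Eventually.filter_mono nhdsWithin_le_nhds
      have hcont : Continuous fun δ : ℝ =>
        orient e a ((1 - δ) • ((1/2 : ℝ) • a + (1/2 : ℝ) • b) + δ • c) :=
        (continuous_orient e a).comp (by fun_prop)
      refine hcont.continuousAt.eventually_const_lt ?_
      beta_reduce
      rw [orient_comb _ _ _ _ _ _ (by ring), orient_comb _ _ _ _ _ _ (by ring), orient_self₂,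
        ← orient_rot]
      linarith
    filter_upwards [h1, h2, self_mem_nhdsWithin] with δ g1 g2 g3
    refine mem_interior_tri ?_ g1 g2
    rw [orient_comb _ _ _ _ _ _ (by ring), orient_comb _ _ _ _ _ _ (by ring), orient_self₂,
        orient_self₃]
    have : 0 < δ := g3
    nlinarith [mul_pos this oc]
  obtain ⟨δ, h1, h2⟩ := ((key c oc).and (key d od)).exists
  have heq := h.eq_of_mem_interior (x := ((1 - δ) • ((1/2 : ℝ) • a + (1/2 : ℝ) • b) + δ • c))
    hc hd (by simpa using h1) (by simpa using h2)
  have hmem : c ∈ ({a, b, d} : Finset Plane) := by rw [← heq]; simp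
  simp only [Finset.mem_insert, Finset.mem_singleton] at hmem
  rcases hmem with rfl | rfl | rfl
  · simp [orient_self₃] at oc
  · simp [orient_self₂] at oc
  · rfl

lemma _root_.orient_eq_zero_of_mem_pair {b c x : Plane}
    (hx : x ∈ convexHull ℝ ({b, c} : Set Plane)) : orient b c x = 0 := by
  rw [convexHull_pair] at hx
  obtain ⟨s, t, -, -, hst, rfl⟩ := hx
  rw [orient_comb _ _ _ _ _ _ hst, orient_self₂, orient_self₃]; ring

/-- An edge `ab` of `𝒯` with a relatively interior point in the interior of the hull has a triangle
on its left side. Applied to both directions of the edge, it gives a triangle on each side. -/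
lemma exists_across (h : IsTri A 𝒯) (hgen : InGeneralPosition A) {a b c : Plane}
    (hc : {a, b, c} ∈ 𝒯) (hne : orient a b c ≠ 0) {r : ℝ} (hr0 : 0 < r) (hr1 : r < 1)
    (hx : (1 - r) • a + r • b ∈ interior (convexHull ℝ (A : Set Plane))) :
    ∃ w, {a, b, w} ∈ 𝒯 ∧ 0 < orient a b w := by
  set x := (1 - r) • a + r • b with hxdef
  have hxab : orient a b x = 0 := by
    rw [hxdef, orient_comb _ _ _ _ _ _ (by ring), orient_self₂, orient_self₃]; ring
  set L : Set Plane := {y | 0 < orient a b y} with hL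
  obtain ⟨z, hz⟩ : ∃ z, 0 < orient a b z := by
    rcases lt_or_gt_of_ne hne with h | h
    · refine ⟨(2:ℝ) • a + (-1:ℝ) • c, ?_⟩
      rw [orient_comb _ _ _ _ _ _ (by ring), orient_self₃]; linarith
    · exact ⟨c, h⟩
  have hxL : x ∈ closure L := by
    have hcont : Continuous fun δ : ℝ => (1 - δ) • x + δ • z := by fun_prop
    have ht : Filter.Tendsto (fun δ : ℝ => (1 - δ) • x + δ • z) (nhdsWithin 0 (Set.Ioi 0))
        (nhds x) := by
      have := hcont.tendsto 0
      simp only [sub_zero, one_smul, zero_smul, add_zero] at this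
      exact this.mono_left nhdsWithin_le_nhds
    refine mem_closure_of_tendsto ht ?_
    filter_upwards [self_mem_nhdsWithin] with δ hδ
    rw [hL, Set.mem_ofPred_eq, orient_comb _ _ _ _ _ _ (by ring), hxab, mul_zero, zero_add]
    exact mul_pos hδ hz
  have h1 : x ∈ closure (interior (convexHull ℝ (A : Set Plane)) ∩ L) :=
    isOpen_interior.inter_closure ⟨hx, hxL⟩
  have h2 : interior (convexHull ℝ (A : Set Plane)) ∩ L ⊆
      ⋃ t ∈ 𝒯, (L ∩ convexHull ℝ (t : Set Plane)) := by
    rintro y ⟨hy, hyL⟩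
    obtain ⟨t, ht, hyt⟩ := h.cover y (interior_subset hy)
    simp only [Set.mem_iUnion]
    exact ⟨t, ht, hyL, hyt⟩
  have h3 := closure_mono h2 h1
  rw [Finset.closure_biUnion] at h3
  simp only [Set.mem_iUnion] at h3
  obtain ⟨t, ht, hxt⟩ := h3
  have hne' : (L ∩ convexHull ℝ (t : Set Plane)).Nonempty := by
    rw [← closure_nonempty_iff]; exact ⟨x, hxt⟩
  have hxt' : x ∈ convexHull ℝ (t : Set Plane) := by
    have hcl : IsClosed (convexHull ℝ (t : Set Plane)) :=
      (t.finite_toSet.isCompact_convexHull ℝ).isClosed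
    exact closure_minimal Set.inter_subset_right hcl hxt
  have hxc : x ∈ convexHull ℝ (({a, b, c} : Finset Plane) : Set Plane) := by
    have hC := convex_convexHull ℝ (({a, b, c} : Finset Plane) : Set Plane)
    exact hC (subset_convexHull ℝ _ (by simp)) (subset_convexHull ℝ _ (by simp)) (by linarith)
      hr0.le (by ring)
  have hxi := h.inter hgen hc ht ⟨hxc, hxt'⟩
  have hat : a ∈ t := by
    by_contra hat
    have hsub : (({a, b, c} ∩ t : Finset Plane) : Set Plane) ⊆ {b, c} := by
      intro y; simp only [Finset.coe_inter, Set.mem_inter_iff, Finset.mem_coe, Finset.mem_insert,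
        Finset.mem_singleton, Set.mem_insert_iff, Set.mem_singleton_iff]
      rintro ⟨rfl | h | h, hy⟩ <;> tauto
    have h0 := orient_eq_zero_of_mem_pair (convexHull_mono hsub hxi)
    rw [hxdef, orient_comb _ _ _ _ _ _ (by ring), orient_self₃, orient_rot] at h0
    have : (1 - r) * orient a b c ≠ 0 := mul_ne_zero (by linarith) hne
    apply this; linarith
  have hbt : b ∈ t := by
    by_contra hbt
    have hsub : (({a, b, c} ∩ t : Finset Plane) : Set Plane) ⊆ {c, a} := by
      intro y; simp only [Finset.coe_inter, Set.mem_inter_iff, Finset.mem_coe, Finset.mem_insert,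
        Finset.mem_singleton, Set.mem_insert_iff, Set.mem_singleton_iff]
      rintro ⟨h | rfl | h, hy⟩ <;> tauto
    have h0 := orient_eq_zero_of_mem_pair (convexHull_mono hsub hxi)
    rw [hxdef, orient_comb _ _ _ _ _ _ (by ring), orient_self₂, ← orient_rot] at h0
    have : r * orient a b c ≠ 0 := mul_ne_zero hr0.ne' hne
    apply this; linarith
  have hab : a ≠ b := by rintro rfl; simp [orient_self₁] at hne
  obtain ⟨w, hw⟩ : ∃ w, t = {a, b, w} := by
    have h1 : ((t.erase a).erase b).card = 1 := by
      rw [Finset.card_erase_of_mem (by simp [hab.symm, hbt]), Finset.card_erase_of_mem hat,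
        h.card t ht]
    obtain ⟨w, hw⟩ := Finset.card_eq_one.1 h1
    refine ⟨w, ?_⟩
    rw [← hw, Finset.insert_erase (by simp [hab.symm, hbt]), Finset.insert_erase hat]
  subst hw
  refine ⟨w, ht, ?_⟩
  by_contra! hw
  obtain ⟨y, hyL, hyt⟩ := hne'
  have : y ∈ {y | 0 ≤ orient b a y} := by
    refine convexHull_min ?_ (convex_orient_nonneg b a) hyt
    intro v hv
    simp only [Finset.coe_insert, Finset.coe_singleton, Set.mem_insert_iff,
      Set.mem_singleton_iff] at hv
    rw [Set.mem_ofPred_eq]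
    rcases hv with rfl | rfl | rfl <;> unfold orient at * <;> linarith
  rw [hL, Set.mem_ofPred_eq] at hyL
  rw [Set.mem_ofPred_eq] at this
  unfold orient at *; linarith

/-- Replacing a set `R` of triangles by an interior-disjoint set `R'` covering the same region
yields a triangulation again, possibly of a smaller point set `A'` with the same hull. -/
lemma replace {A' : Finset Plane} {R R' : Finset (Finset Plane)} (h : IsTri A 𝒯)
    (hgen : InGeneralPosition A) (hR : R ⊆ 𝒯)
    (hA : convexHull ℝ (A' : Set Plane) = convexHull ℝ (A : Set Plane)) (hAA : A' ⊆ A)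
    (hsub : ∀ t ∈ 𝒯, t ∉ R → t ⊆ A') (hsub' : ∀ t ∈ R', t ⊆ A') (hcard : ∀ t ∈ R', t.card = 3)
    (hU : ∀ x, (∃ t ∈ R, x ∈ convexHull ℝ (t : Set Plane)) ↔
      (∃ t ∈ R', x ∈ convexHull ℝ (t : Set Plane)))
    (hdisj : ∀ s ∈ R', ∀ t ∈ R', s ≠ t → Disjoint (interior (convexHull ℝ (s : Set Plane)))
      (interior (convexHull ℝ (t : Set Plane))))
    (hvert : ∀ t ∈ R, ∀ a ∈ t, a ∈ A' → ∃ t' ∈ R', a ∈ t') :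
    IsTri A' ((𝒯 \ R) ∪ R') := by
  have key : ∀ s ∈ 𝒯 \ R, ∀ t ∈ R', Disjoint (interior (convexHull ℝ (s : Set Plane)))
      (convexHull ℝ (t : Set Plane)) := by
    intro s hs t ht
    rw [Finset.mem_sdiff] at hs
    rw [Set.disjoint_left]
    intro x hxs hxt
    obtain ⟨r, hr, hxr⟩ := (hU x).2 ⟨t, ht, hxt⟩
    refine Set.disjoint_left.1 (h.disj' hgen hs.1 (hR hr) ?_) hxs hxr
    rintro rfl; exact hs.2 hr
  refine ⟨?_, ?_, ?_, ?_, ?_⟩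
  · intro t ht
    rcases Finset.mem_union.1 ht with ht | ht
    · rw [Finset.mem_sdiff] at ht; exact hsub t ht.1 ht.2
    · exact hsub' t ht
  · intro t ht
    rcases Finset.mem_union.1 ht with ht | ht
    · rw [Finset.mem_sdiff] at ht; exact h.card t ht.1
    · exact hcard t ht
  · intro x hx
    rw [hA] at hx
    obtain ⟨t, ht, hxt⟩ := h.cover x hx
    by_cases htR : t ∈ R
    · obtain ⟨t', ht', hx'⟩ := (hU x).1 ⟨t, htR, hxt⟩
      exact ⟨t', Finset.mem_union_right _ ht', hx'⟩
    · exact ⟨t, Finset.mem_union_left _ (Finset.mem_sdiff.2 ⟨ht, htR⟩), hxt⟩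
  · intro s hs t ht hst
    rcases Finset.mem_union.1 hs with hs | hs <;> rcases Finset.mem_union.1 ht with ht | ht
    · rw [Finset.mem_sdiff] at hs ht; exact h.disj s hs.1 t ht.1 hst
    · exact (key s hs t ht).mono_right interior_subset
    · exact ((key t ht s hs).mono_right interior_subset).symm
    · exact hdisj s hs t ht hst
  · intro a ha
    obtain ⟨t, ht, hat⟩ := h.vert a (hAA ha)
    by_cases htR : t ∈ R
    · obtain ⟨t', ht', hx'⟩ := hvert t htR a hat ha
      exact ⟨t', Finset.mem_union_right _ ht', hx'⟩
    · exact ⟨t, Finset.mem_union_left _ (Finset.mem_sdiff.2 ⟨ht, htR⟩), hat⟩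

end IsTri

/-! ### From simplicial complexes to sets of triangles and back -/

/-- The triangles of the simplicial complex `T` with vertices in `A`. -/
noncomputable def tris (A : Finset Plane) (T : SimplicialComplex ℝ Plane) :
    Finset (Finset Plane) :=
  A.powerset.filter fun s => s ∈ T.faces ∧ s.card = 3

section
variable {A : Finset Plane} {T : SimplicialComplex ℝ Plane}

lemma IsTriangulation.face_subset (h : IsTriangulation A T) {s : Finset Plane}
    (hs : s ∈ T.faces) : s ⊆ A := by
  intro y hy
  have : y ∈ T.vertices := T.down_closed hs (Finset.singleton_subset_iff.2 hy) (by simp)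
  rw [h.2.2] at this
  exact this

lemma IsTriangulation.mem_tris (h : IsTriangulation A T) {s : Finset Plane} :
    s ∈ tris A T ↔ s ∈ T.faces ∧ s.card = 3 := by
  simp only [tris, Finset.mem_filter, Finset.mem_powerset]
  exact ⟨fun h => h.2, fun h' => ⟨h.face_subset h'.1, h'⟩⟩

/-- The triangles alone cover the hull: the faces of smaller dimension have empty interior, and the
hull is the closure of its interior. -/
lemma IsTriangulation.cover (h : IsTriangulation A T)
    (hint : (interior (convexHull ℝ (A : Set Plane))).Nonempty) {x : Plane}
    (hx : x ∈ convexHull ℝ (A : Set Plane)) :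
    ∃ t ∈ tris A T, x ∈ convexHull ℝ (t : Set Plane) := by
  set F : Set Plane := ⋃ t ∈ tris A T, convexHull ℝ (t : Set Plane) with hF
  set lo := A.powerset.filter fun s => s.card ≤ 2 with hlo
  set E : Set Plane := ⋃ t ∈ lo, convexHull ℝ (t : Set Plane) with hE
  have hcl : ∀ t : Finset Plane, IsClosed (convexHull ℝ (t : Set Plane)) := fun t =>
    (t.finite_toSet.isCompact_convexHull ℝ).isClosed
  have hFc : IsClosed F := isClosed_biUnion_finset fun t _ => hcl t
  have hEi : interior E = ∅ := by
    have : ∀ l : Finset (Finset Plane), (∀ s ∈ l, s.card ≤ 2) →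
        interior (⋃ t ∈ l, convexHull ℝ (t : Set Plane)) = ∅ := by
      intro l
      induction l using Finset.induction_on with
      | empty => simp
      | insert a l ha ih =>
        intro hl
        rw [Finset.set_biUnion_insert, interior_union_isClosed_of_interior_empty (hcl a)
          (ih fun s hs => hl s (by simp [hs]))]
        exact interior_eq_empty_of_card (hl a (by simp))
    exact this lo fun s hs => (Finset.mem_filter.1 hs).2
  have hsub : interior (convexHull ℝ (A : Set Plane)) ⊆ F := by
    intro y hy
    by_contra hyF
    have hO : IsOpen (interior (convexHull ℝ (A : Set Plane)) \ F) := isOpen_interior.sdiff hFc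
    have : interior (convexHull ℝ (A : Set Plane)) \ F ⊆ E := by
      rintro z ⟨hz, hzF⟩
      have hz' := interior_subset hz
      rw [← h.2.1, SimplicialComplex.mem_space_iff] at hz'
      obtain ⟨s, hs, hzs⟩ := hz'
      have h3 := h.1 s hs
      by_cases hs3 : s.card = 3
      · exfalso; apply hzF
        simp only [hF, Set.mem_iUnion]
        exact ⟨s, h.mem_tris.2 ⟨hs, hs3⟩, hzs⟩
      · simp only [hE, Set.mem_iUnion]
        exact ⟨s, Finset.mem_filter.2 ⟨Finset.mem_powerset.2 (h.face_subset hs), by omega⟩, hzs⟩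
    have := interior_maximal this hO ⟨hy, hyF⟩
    rw [hEi] at this; exact this
  have hx' : x ∈ closure (interior (convexHull ℝ (A : Set Plane))) := by
    rw [(convex_convexHull ℝ _).closure_interior_eq_closure_of_nonempty_interior hint]
    exact subset_closure hx
  have := closure_minimal hsub hFc hx'
  simpa [hF] using this

lemma IsTriangulation.isTri (h : IsTriangulation A T)
    (hint : (interior (convexHull ℝ (A : Set Plane))).Nonempty) : IsTri A (tris A T) where
  sub t ht := h.face_subset (h.mem_tris.1 ht).1
  card t ht := (h.mem_tris.1 ht).2
  cover x hx := h.cover hint hx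
  disj s hs t ht hst := by
    rw [h.mem_tris] at hs ht
    rw [Set.disjoint_iff_inter_eq_empty, ← interior_inter]
    have h1 := T.inter_subset_convexHull hs.1 ht.1
    have h2 : (s ∩ t).card ≤ 2 := by
      by_contra! hc
      have e1 := Finset.eq_of_subset_of_card_le (Finset.inter_subset_left (s₁ := s) (s₂ := t))
        (by omega)
      have e2 := Finset.eq_of_subset_of_card_le (Finset.inter_subset_right (s₁ := s) (s₂ := t))
        (by omega)
      exact hst (e1.symm.trans e2)
    have h3 := interior_mono h1
    rw [← Finset.coe_inter, interior_eq_empty_of_card h2] at h3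
    exact Set.subset_empty_iff.1 h3
  vert a ha := by
    obtain ⟨t, ht, hat⟩ := h.cover hint (subset_convexHull ℝ _ ha)
    refine ⟨t, ht, ?_⟩
    have hav : a ∈ T.vertices := by rw [h.2.2]; exact ha
    exact (T.vertex_mem_convexHull_iff hav (h.mem_tris.1 ht).1).1 hat

/-- A triangulation is pure: its faces are the nonempty subsets of its triangles. -/
lemma IsTriangulation.mem_faces_iff (h : IsTriangulation A T)
    (hint : (interior (convexHull ℝ (A : Set Plane))).Nonempty) {s : Finset Plane} :
    s ∈ T.faces ↔ s.Nonempty ∧ ∃ t ∈ tris A T, s ⊆ t := by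
  constructor
  · intro hs
    have hsn := T.nonempty_of_mem_faces hs
    refine ⟨hsn, ?_⟩
    -- a triangle that contains the centroid `x` of the face `s` contains all vertices of `s`
    set x := s.centerMass (fun _ => (1:ℝ)) id with hx
    have hpos : (0:ℝ) < ∑ _i ∈ s, (1:ℝ) := by simpa using hsn
    have hxs : x ∈ convexHull ℝ (s : Set Plane) :=
      Finset.centerMass_id_mem_convexHull s (fun _ _ => zero_le_one) hpos
    obtain ⟨t, ht, hxt⟩ := h.cover hint
      (convexHull_mono (Finset.coe_subset.2 (h.face_subset hs)) hxs)
    refine ⟨t, ht, ?_⟩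
    have hxi := T.inter_subset_convexHull hs (h.mem_tris.1 ht).1 ⟨hxs, hxt⟩
    -- compare the two barycentric representations of `x`
    rw [← Finset.coe_inter, Finset.mem_convexHull'] at hxi
    obtain ⟨w, hw0, hw1, hwx⟩ := hxi
    have hind := T.indep hs
    intro y hy
    by_contra hyt
    have hind' := affineIndependent_iff.1 hind Finset.univ
      (fun z => (if (z : Plane) ∈ t then w z else 0) - (s.card : ℝ)⁻¹) ?_ ?_
    · have := hind' ⟨y, hy⟩ (Finset.mem_univ _)
      simp only [hyt, if_false, zero_sub, neg_eq_zero, inv_eq_zero, Nat.cast_eq_zero,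
        Finset.card_eq_zero] at this
      exact hsn.ne_empty this
    · rw [Finset.univ_eq_attach, Finset.sum_attach s
        (fun z => (if z ∈ t then w z else 0) - (s.card : ℝ)⁻¹), Finset.sum_sub_distrib,
        ← Finset.sum_filter, Finset.filter_mem_eq_inter, hw1]
      have : (s.card : ℝ) ≠ 0 := by simpa using hsn.ne_empty
      simp; field_simp; simp
    · rw [Finset.univ_eq_attach, Finset.sum_attach s
        (fun z => ((if z ∈ t then w z else 0) - (s.card : ℝ)⁻¹) • z)]
      simp only [sub_smul, ite_smul, zero_smul]
      rw [Finset.sum_sub_distrib,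
        ← Finset.sum_filter, Finset.filter_mem_eq_inter, hwx, hx]
      simp [Finset.centerMass, Finset.smul_sum]
  · rintro ⟨hsn, t, ht, hst⟩
    exact T.down_closed (h.mem_tris.1 ht).1 hst hsn

lemma tris_injOn (hint : (interior (convexHull ℝ (A : Set Plane))).Nonempty)
    {T₁ T₂ : SimplicialComplex ℝ Plane} (h₁ : IsTriangulation A T₁) (h₂ : IsTriangulation A T₂)
    (h : tris A T₁ = tris A T₂) : T₁ = T₂ := by
  ext s
  rw [h₁.mem_faces_iff hint, h₂.mem_faces_iff hint, h]

/-- The simplicial complex whose faces are the nonempty subsets of the triangles in `𝒯`. -/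
def IsTri.toComplex {𝒯 : Finset (Finset Plane)} (h : IsTri A 𝒯) (hgen : InGeneralPosition A) :
    SimplicialComplex ℝ Plane where
  faces := {s | s.Nonempty ∧ ∃ t ∈ 𝒯, s ⊆ t}
  isRelLowerSet_faces := by
    rintro s ⟨hs, t, ht, hst⟩
    exact ⟨hs, fun u hu hun => ⟨hun, t, ht, hu.trans hst⟩⟩
  indep := by
    rintro s ⟨hs, t, ht, hst⟩
    obtain ⟨a, b, c, rfl, ho⟩ := card_three_ccw hgen (h.sub t ht) (h.card t ht)
    exact (affineIndependent_of_orient ho.ne').mono (Finset.coe_subset.2 hst)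
  inter_subset_convexHull := by
    rintro s₁ s₂ ⟨hs₁, t₁, ht₁, h₁⟩ ⟨hs₂, t₂, ht₂, h₂⟩ x ⟨hx₁, hx₂⟩
    have hind : ∀ t ∈ 𝒯, AffineIndependent ℝ ((↑) : t → Plane) := by
      intro t ht
      obtain ⟨a, b, c, rfl, ho⟩ := card_three_ccw hgen (h.sub t ht) (h.card t ht)
      exact affineIndependent_of_orient ho.ne'
    have hx := h.inter hgen ht₁ ht₂ ⟨convexHull_mono (Finset.coe_subset.2 h₁) hx₁,
      convexHull_mono (Finset.coe_subset.2 h₂) hx₂⟩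
    have a1 := (hind t₁ ht₁).convexHull_inter (t₂ := t₁ ∩ t₂) h₁ Finset.inter_subset_left
    have a2 := (hind t₂ ht₂).convexHull_inter (t₂ := t₁ ∩ t₂) h₂ Finset.inter_subset_right
    have b1 : x ∈ convexHull ℝ ((s₁ ∩ (t₁ ∩ t₂) : Finset Plane) : Set Plane) := by
      rw [Finset.coe_inter, a1]; exact ⟨hx₁, hx⟩
    have b2 : x ∈ convexHull ℝ ((s₂ ∩ (t₁ ∩ t₂) : Finset Plane) : Set Plane) := by
      rw [Finset.coe_inter, a2]; exact ⟨hx₂, hx⟩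
    have a3 := (hind t₁ ht₁).convexHull_inter (t₁ := s₁ ∩ (t₁ ∩ t₂)) (t₂ := s₂ ∩ (t₁ ∩ t₂))
      (Finset.inter_subset_left.trans h₁)
      (Finset.inter_subset_right.trans Finset.inter_subset_left)
    have b3 : x ∈ convexHull ℝ
        (((s₁ ∩ (t₁ ∩ t₂)) : Finset Plane) ∩ ((s₂ ∩ (t₁ ∩ t₂)) : Finset Plane) : Set Plane) := by
      rw [a3]; exact ⟨b1, b2⟩
    refine convexHull_mono ?_ b3
    intro y; simp; tauto

lemma IsTri.toComplex_isTriangulation {𝒯 : Finset (Finset Plane)} (h : IsTri A 𝒯)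
    (hgen : InGeneralPosition A) : IsTriangulation A (h.toComplex hgen) := by
  have hf : ∀ s, s ∈ (h.toComplex hgen).faces ↔ s.Nonempty ∧ ∃ t ∈ 𝒯, s ⊆ t := fun s => Iff.rfl
  refine ⟨?_, ?_, ?_⟩
  · rintro s ⟨hs, t, ht, hst⟩
    exact (Finset.card_le_card hst).trans (h.card t ht).le
  · ext x
    rw [SimplicialComplex.mem_space_iff]
    constructor
    · rintro ⟨s, ⟨hs, t, ht, hst⟩, hx⟩
      exact convexHull_mono (Finset.coe_subset.2 (hst.trans (h.sub t ht))) hx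
    · intro hx
      obtain ⟨t, ht, hxt⟩ := h.cover x hx
      have h3 := h.card t ht
      exact ⟨t, ⟨Finset.card_pos.1 (by omega), t, ht, subset_rfl⟩, hxt⟩
  · ext x
    rw [SimplicialComplex.mem_vertices, hf]
    constructor
    · rintro ⟨-, t, ht, hx⟩
      exact h.sub t ht (by simpa using hx)
    · intro hx
      obtain ⟨t, ht, hxt⟩ := h.vert x hx
      exact ⟨by simp, t, ht, by simpa using hxt⟩

lemma IsTri.tris_toComplex {𝒯 : Finset (Finset Plane)} (h : IsTri A 𝒯)
    (hgen : InGeneralPosition A) : tris A (h.toComplex hgen) = 𝒯 := by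
  ext s
  rw [(h.toComplex_isTriangulation hgen).mem_tris]
  constructor
  · rintro ⟨⟨hs, t, ht, hst⟩, hc⟩
    have := Finset.eq_of_subset_of_card_le hst (by rw [h.card t ht, hc])
    rwa [this]
  · intro hs
    have h3 := h.card s hs
    exact ⟨⟨Finset.card_pos.1 (by omega), s, hs, subset_rfl⟩, h3⟩
end

/-! ### Star-shaped polygons, quadrilaterals and split triangles -/

/-- The Grassmann–Plücker relation for the four vectors from `p` to `a`, `b`, `c`, `x`. -/
lemma plucker (p a b c x : Plane) :
    orient p a b * orient p c x + orient p b c * orient p a x = orient p a c * orient p b x := by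
  unfold orient; ring

lemma orient_eq_sum (p a b c : Plane) :
    orient a b c = orient p a b + orient p b c - orient p a c := by
  unfold orient; ring

/-- A polygon, star-shaped around `p`, with at least four vertices has a vertex `v` that is strictly
convex and sees its two neighbours `ρ v` and `σ v` under an angle less than `π` at `p`.
Here `σ` and `ρ` are the successor and the predecessor in counterclockwise order around `p`.

If there is no such vertex, a vertex at which a linear functional is maximal and positive cannot
have its neighbours under an angle less than `π`. Varying the functional produces vertices `b`
with `orient p (ρ b) (σ b) ≤ 0` in too many positions: two such vertices must be adjacent. -/
lemma exists_flip {V : Finset Plane} {p : Plane} {σ ρ : Plane → Plane}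
    (hσ : ∀ v ∈ V, σ v ∈ V) (hρ : ∀ v ∈ V, ρ v ∈ V)
    (hσρ : ∀ v ∈ V, σ (ρ v) = v) (hρσ : ∀ v ∈ V, ρ (σ v) = v)
    (hpos : ∀ v ∈ V, 0 < orient p v (σ v))
    (hempty : ∀ v ∈ V, ∀ x ∈ V, 0 < orient p v x → ¬ 0 < orient p x (σ v))
    (hgen : ∀ v ∈ V, ∀ w ∈ V, v ≠ w → orient p v w ≠ 0)
    (hgen3 : ∀ v ∈ V, orient (ρ v) v (σ v) ≠ 0)
    (hcard : 4 ≤ V.card) :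
    ∃ v ∈ V, 0 < orient p (ρ v) (σ v) ∧ 0 < orient (ρ v) v (σ v) := by
  have anti : ∀ x y, orient p x y = - orient p y x := fun x y => orient_swap p y x
  have hposρ : ∀ v ∈ V, 0 < orient p (ρ v) v := fun v hv => by
    have := hpos (ρ v) (hρ v hv); rwa [hσρ v hv] at this
  have hσne : ∀ v ∈ V, v ≠ σ v := fun v hv h => by
    have := hpos v hv; rw [← h, orient_self₂] at this; exact lt_irrefl _ this
  have hρne : ∀ v ∈ V, ρ v ≠ v := fun v hv h => by
    have := hposρ v hv; rw [h, orient_self₂] at this; exact lt_irrefl _ this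
  have hρσne : ∀ v ∈ V, ρ v ≠ σ v := fun v hv h => by
    have h1 := hpos v hv
    have h2 := hposρ v hv
    rw [h, anti] at h2; linarith
  have hlt : ∀ v ∈ V, ∀ w ∈ V, v ≠ w → ¬ 0 < orient p v w → 0 < orient p w v :=
    fun v hv w hw hne h => by
      have := lt_of_le_of_ne (not_lt.1 h) (hgen v hv w hw hne)
      rw [anti]; linarith
  by_contra! hbad
  -- a vertex where a linear functional has a positive maximum sees an angle of at least `π`
  have hmax : ∀ b ∈ V, ∀ s : ℝ, (∃ x ∈ V, 0 < s * orient p b x) →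
      ∃ v ∈ V, 0 < s * orient p b v ∧ orient p (ρ v) (σ v) ≤ 0 := by
    rintro b hb s ⟨x, hx, hxpos⟩
    obtain ⟨v, hv, hvmax⟩ := V.exists_max_image (fun y => s * orient p b y) ⟨x, hx⟩
    have hM : 0 < s * orient p b v := hxpos.trans_le (hvmax x hx)
    refine ⟨v, hv, hM, ?_⟩
    by_contra! he
    have h1 := lt_of_le_of_ne (hbad v hv he) (hgen3 v hv)
    rw [orient_eq_sum p] at h1
    have hu := hvmax (ρ v) (hρ v hv)
    have hw := hvmax (σ v) (hσ v hv)
    have hrel : orient p v (σ v) * (s * orient p b (ρ v))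
        + orient p (ρ v) v * (s * orient p b (σ v))
        = orient p (ρ v) (σ v) * (s * orient p b v) := by
      unfold orient; ring
    have g1 := mul_le_mul_of_nonneg_left hu (hpos v hv).le
    have g2 := mul_le_mul_of_nonneg_left hw (hposρ v hv).le
    have g3 := mul_lt_mul_of_pos_right h1 hM
    beta_reduce at g1 g2
    nlinarith
  have hneg : ∀ b ∈ V, orient p (ρ b) (σ b) ≤ 0 → 0 < orient p (σ b) (ρ b) := fun b hb h =>
    hlt _ (hρ b hb) _ (hσ b hb) (hρσne b hb) (not_lt.2 h)
  have hfar : ∀ b ∈ V, orient p (ρ b) (σ b) ≤ 0 → ∀ x ∈ V, x ≠ ρ b → x ≠ b → x ≠ σ b →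
      0 < orient p (σ b) x ∧ 0 < orient p x (ρ b) := by
    intro b hb hB x hx hxu hxb hxw
    have hu := hρ b hb
    have hw := hσ b hb
    have hub := hposρ b hb
    have hbw := hpos b hb
    have hwu := hneg b hb hB
    have e1 : 0 < orient p (ρ b) x → ¬ 0 < orient p x b := by
      have := hempty (ρ b) hu x hx; rwa [hσρ b hb] at this
    have e2 := hempty b hb x hx
    have pl := plucker p (ρ b) b (σ b) x
    have hxu' : 0 < orient p x (ρ b) := by
      by_contra h
      have h1 := hlt x hx _ hu hxu h
      have h2 := hlt x hx b hb hxb (e1 h1)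
      have h3 := hlt x hx _ hw hxw (e2 h2)
      have := mul_pos hub h3
      have := mul_pos hbw h1
      have := mul_nonneg (neg_nonneg.2 hB) h2.le
      linarith
    refine ⟨?_, hxu'⟩
    by_contra h
    have h1 := hlt _ hw x hx (Ne.symm hxw) h
    have h2 : 0 < orient p x b := hlt b hb x hx (Ne.symm hxb) (fun h' => e2 h' h1)
    rw [anti (σ b) x, anti (ρ b) x, anti b x, anti (ρ b) (σ b)] at pl
    have := mul_pos hub h1
    have := mul_pos hbw hxu'
    have := mul_pos hwu h2
    linarith
  have hadj : ∀ b ∈ V, orient p (ρ b) (σ b) ≤ 0 → ∀ x ∈ V, x ≠ ρ b → x ≠ b → x ≠ σ b →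
      ¬ orient p (ρ x) (σ x) ≤ 0 := by
    intro b hb hB x hx hxu hxb hxw hBx
    have hge : ∀ y ∈ V, y ≠ b → 0 ≤ orient p (σ b) y := by
      intro y hy hyb
      by_cases h1 : y = ρ b
      · rw [h1]; exact (hneg b hb hB).le
      by_cases h2 : y = σ b
      · rw [h2, orient_self₂]
      exact (hfar b hb hB y hy h1 hyb h2).1.le
    have h1 : ρ x ≠ b := fun h => hxw (by rw [← h, hσρ x hx])
    have h2 : σ x ≠ b := fun h => hxu (by rw [← h, hρσ x hx])
    have g1 := hge _ (hρ x hx) h1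
    have g2 := hge _ (hσ x hx) h2
    have g3 := (hfar b hb hB x hx hxu hxb hxw).1
    have g4 := hneg x hx hBx
    have hrel : orient p (ρ x) x * orient p (σ b) (σ x) + orient p x (σ x) * orient p (σ b) (ρ x)
        + orient p (σ x) (ρ x) * orient p (σ b) x = 0 := by unfold orient; ring
    have := mul_nonneg (hposρ x hx).le g2
    have := mul_nonneg (hpos x hx).le g1
    have := mul_pos g4 g3
    linarith
  obtain ⟨v₀, hv₀⟩ : V.Nonempty := Finset.card_pos.1 (by omega)
  obtain ⟨b, hb, -, hB⟩ := hmax v₀ hv₀ 1 ⟨σ v₀, hσ v₀ hv₀, by simpa using hpos v₀ hv₀⟩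
  by_cases hBw : orient p (ρ (σ b)) (σ (σ b)) ≤ 0
  · by_cases hBu : orient p (ρ (ρ b)) (σ (ρ b)) ≤ 0
    · have hσσ : ρ b = σ (σ b) := by
        by_contra hne
        refine hadj (σ b) (hσ b hb) hBw (ρ b) (hρ b hb) ?_ (hρσne b hb) hne hBu
        rw [hρσ b hb]; exact hρne b hb
      obtain ⟨x, hx, hx'⟩ : ∃ x ∈ V, x ∉ ({ρ b, b, σ b} : Finset Plane) := by
        apply Finset.exists_mem_notMem_of_card_lt_card
        exact (Finset.card_le_three).trans_lt (by omega)
      simp only [Finset.mem_insert, Finset.mem_singleton, not_or] at hx'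
      have := hfar b hb hB x hx hx'.1 hx'.2.1 hx'.2.2
      rw [hσσ] at this
      exact hempty (σ b) (hσ b hb) x hx this.1 this.2
    · obtain ⟨v, hv, hvpos, hBv⟩ := hmax b hb (-1) ⟨ρ b, hρ b hb, by
        rw [anti]; simpa using hposρ b hb⟩
      refine hadj b hb hB v hv ?_ ?_ ?_ hBv
      · rintro rfl; exact hBu hBv
      · rintro rfl; simp [orient_self₂] at hvpos
      · rintro rfl; linarith [hpos b hb]
  · obtain ⟨v, hv, hvpos, hBv⟩ := hmax b hb 1 ⟨σ b, hσ b hb, by simpa using hpos b hb⟩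
    refine hadj b hb hB v hv ?_ ?_ ?_ hBv
    · rintro rfl; rw [anti] at hvpos; linarith [hposρ b hb]
    · rintro rfl; simp [orient_self₂] at hvpos
    · rintro rfl; exact hBw hBv

/-- A convex quadrilateral `abcd` is the union of the triangles `abc` and `acd`. -/
lemma mem_quad {a b c d : Plane} (h1 : 0 < orient a b c) (h2 : 0 < orient b c d)
    (h3 : 0 < orient c d a) (h4 : 0 < orient d a b) (x : Plane) :
    (x ∈ convexHull ℝ ({a, b, c} : Set Plane) ∨ x ∈ convexHull ℝ ({a, c, d} : Set Plane)) ↔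
      0 ≤ orient a b x ∧ 0 ≤ orient b c x ∧ 0 ≤ orient c d x ∧ 0 ≤ orient d a x := by
  constructor
  · rintro (hx | hx)
    all_goals
      refine ⟨convexHull_min ?_ (convex_orient_nonneg a b) hx,
        convexHull_min ?_ (convex_orient_nonneg b c) hx,
        convexHull_min ?_ (convex_orient_nonneg c d) hx,
        convexHull_min ?_ (convex_orient_nonneg d a) hx⟩ <;>
      · rintro y (rfl | rfl | rfl) <;>
        · rw [Set.mem_ofPred_eq]
          unfold orient at *
          linarith
  · rintro ⟨g1, g2, g3, g4⟩
    rw [mem_tri_iff h1, mem_tri_iff (by rw [← orient_rot]; exact h3)]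
    rcases le_total 0 (orient a c x) with h | h
    · exact Or.inr ⟨h, g3, g4⟩
    · refine Or.inl ⟨g1, g2, ?_⟩
      unfold orient at *; linarith

lemma disjoint_interior_of_line {a b c : Plane} (hc : orient a b c ≠ 0) {S S' : Set Plane}
    (hS : ∀ x ∈ S, 0 ≤ orient a b x) (hS' : ∀ x ∈ S', 0 ≤ orient b a x) :
    Disjoint (interior S) (interior S') := by
  rw [Set.disjoint_left]
  intro x hx hx'
  have hz : ∀ y ∈ interior S ∩ interior S', orient a b y = 0 := by
    rintro y ⟨hy, hy'⟩
    have h1 := hS y (interior_subset hy)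
    have h2 := hS' y (interior_subset hy')
    unfold orient at *; linarith
  have hx0 := hz x ⟨hx, hx'⟩
  have hopen : IsOpen (interior S ∩ interior S') := isOpen_interior.inter isOpen_interior
  have hcont : Continuous fun δ : ℝ => (1 - δ) • x + δ • c := by fun_prop
  have h0 : (fun δ : ℝ => (1 - δ) • x + δ • c) 0 ∈ interior S ∩ interior S' := by
    simpa using ⟨hx, hx'⟩
  have hev : ∀ᶠ δ : ℝ in nhdsWithin 0 (Set.Ioi 0),
      (1 - δ) • x + δ • c ∈ interior S ∩ interior S' :=
    (hcont.continuousAt.eventually_mem (hopen.mem_nhds h0)).filter_mono nhdsWithin_le_nhds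
  obtain ⟨δ, hδ, hδ0⟩ := (hev.and self_mem_nhdsWithin).exists
  have h1 := hz _ hδ
  rw [orient_comb _ _ _ _ _ _ (by ring), hx0, mul_zero, zero_add] at h1
  exact (mul_ne_zero (ne_of_gt hδ0) hc) h1

/-- The three triangles spanned by an interior point `p` and the sides of `abc` cover `abc`. -/
lemma mem_three {p a b c : Plane} (h1 : 0 < orient p a b) (h2 : 0 < orient p b c)
    (h3 : 0 < orient p c a) (x : Plane) :
    (x ∈ convexHull ℝ ({p, a, b} : Set Plane) ∨ x ∈ convexHull ℝ ({p, b, c} : Set Plane) ∨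
      x ∈ convexHull ℝ ({p, c, a} : Set Plane)) ↔ x ∈ convexHull ℝ ({a, b, c} : Set Plane) := by
  have habc : 0 < orient a b c := by unfold orient at *; linarith
  have hp : p ∈ convexHull ℝ ({a, b, c} : Set Plane) := by
    rw [mem_tri_iff habc]
    refine ⟨?_, ?_, ?_⟩ <;> unfold orient at * <;> linarith
  constructor
  · rintro (hx | hx | hx)
    all_goals
      refine convexHull_min ?_ (convex_convexHull ℝ _) hx
      rintro y (rfl | rfl | rfl)
      · exact hp
      all_goals exact subset_convexHull ℝ _ (by simp)
  · rw [mem_tri_iff habc, mem_tri_iff h1, mem_tri_iff h2, mem_tri_iff h3]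
    rintro ⟨g1, g2, g3⟩
    have hrel : orient p b c * orient p a x + orient p c a * orient p b x
        + orient p a b * orient p c x = 0 := by unfold orient; ring
    have anti : ∀ y, orient y p x = - orient p y x := fun y => by unfold orient; ring
    rw [anti, anti, anti]
    rcases le_or_gt 0 (orient p a x) with ha | ha
    · rcases le_or_gt (orient p b x) 0 with hb | hb
      · exact Or.inl ⟨ha, g1, by linarith⟩
      · rcases le_or_gt (orient p c x) 0 with hc | hc
        · exact Or.inr (Or.inl ⟨hb.le, g2, by linarith⟩)
        · have := mul_nonneg h2.le ha
          have := mul_pos h3 hb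
          have := mul_pos h1 hc
          linarith
    · rcases le_or_gt 0 (orient p c x) with hc | hc
      · exact Or.inr (Or.inr ⟨hc, g3, by linarith⟩)
      · rcases le_or_gt 0 (orient p b x) with hb | hb
        · exact Or.inr (Or.inl ⟨hb, g2, by linarith⟩)
        · have := mul_neg_of_pos_of_neg h2 ha
          have := mul_neg_of_pos_of_neg h3 hb
          have := mul_neg_of_pos_of_neg h1 hc
          linarith

/-! ### The star of an interior vertex -/

/-- The star of `p`, as the set of directed edges `(u, w)` opposite to `p` in the triangles of `𝒯` at
`p`, directed counterclockwise around `p`. -/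
noncomputable def starD (A : Finset Plane) (𝒯 : Finset (Finset Plane)) (p : Plane) :
    Finset (Plane × Plane) :=
  (A ×ˢ A).filter fun e => {p, e.1, e.2} ∈ 𝒯 ∧ 0 < orient p e.1 e.2

/-- The neighbours of `p`: the other vertices of the triangles of `𝒯` at `p`. -/
noncomputable def link (A : Finset Plane) (𝒯 : Finset (Finset Plane)) (p : Plane) :
    Finset Plane :=
  A.filter fun v => v ≠ p ∧ ∃ t ∈ 𝒯, p ∈ t ∧ v ∈ t

namespace IsTri
variable {A : Finset Plane} {𝒯 : Finset (Finset Plane)} {p : Plane}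

lemma mem_starD (h : IsTri A 𝒯) {u w : Plane} :
    (u, w) ∈ starD A 𝒯 p ↔ {p, u, w} ∈ 𝒯 ∧ 0 < orient p u w := by
  simp only [starD, Finset.mem_filter, Finset.mem_product, and_iff_right_iff_imp]
  rintro ⟨h1, -⟩
  have := h.sub _ h1
  exact ⟨this (by simp), this (by simp)⟩

lemma mem_link (h : IsTri A 𝒯) {v : Plane} :
    v ∈ link A 𝒯 p ↔ v ≠ p ∧ ∃ t ∈ 𝒯, p ∈ t ∧ v ∈ t := by
  simp only [link, Finset.mem_filter, and_iff_right_iff_imp]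
  rintro ⟨-, t, ht, -, hv⟩
  exact h.sub t ht hv

lemma _root_.Finset.eq_triple {t : Finset Plane} {a b : Plane} (ha : a ∈ t) (hb : b ∈ t)
    (hab : b ≠ a) (h3 : t.card = 3) : ∃ c, t = {a, b, c} := by
  have h1 : ((t.erase a).erase b).card = 1 := by
    rw [Finset.card_erase_of_mem (by simp [hab, hb]), Finset.card_erase_of_mem ha, h3]
  obtain ⟨w, hw⟩ := Finset.card_eq_one.1 h1
  refine ⟨w, ?_⟩
  rw [← hw, Finset.insert_erase (by simp [hab, hb]), Finset.insert_erase ha]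

lemma orient_ne (h : IsTri A 𝒯) (hgen : InGeneralPosition A) {a b c : Plane}
    (hc : {a, b, c} ∈ 𝒯) : orient a b c ≠ 0 := by
  have h3 := h.card _ hc
  have hs := h.sub _ hc
  refine orient_ne_zero hgen (hs (by simp)) (hs (by simp)) (hs (by simp)) ?_ ?_ ?_
  all_goals
    intro he
    rw [he] at h3
    have := Finset.card_le_two (a := b) (b := c)
    have := Finset.card_le_two (a := a) (b := c)
    have := Finset.card_le_two (a := c) (b := c)
    have := Finset.card_le_two (a := c) (b := b)
    simp only [Finset.insert_eq_of_mem, Finset.mem_singleton, Finset.mem_insert, true_or, or_true]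
      at h3
    omega

/-- Around an interior vertex `p` every neighbour has a successor and a predecessor. -/
lemma exists_next (h : IsTri A 𝒯) (hgen : InGeneralPosition A)
    (hpint : p ∈ interior (convexHull ℝ (A : Set Plane))) {v : Plane} (hv : v ∈ link A 𝒯 p) :
    (∃ w, (v, w) ∈ starD A 𝒯 p) ∧ ∃ u, (u, v) ∈ starD A 𝒯 p := by
  obtain ⟨hvp, t, ht, hpt, hvt⟩ := h.mem_link.1 hv
  obtain ⟨c, rfl⟩ := Finset.eq_triple hpt hvt hvp (h.card t ht)
  have hne := h.orient_ne hgen ht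
  obtain ⟨r, hr, hr0, hr1⟩ : ∃ r : ℝ, (1 - r) • p + r • v ∈
      interior (convexHull ℝ (A : Set Plane)) ∧ 0 < r ∧ r < 1 := by
    have hcont : Continuous fun δ : ℝ => (1 - δ) • p + δ • v := by fun_prop
    have hev : ∀ᶠ δ : ℝ in nhdsWithin 0 (Set.Ioi 0),
        (1 - δ) • p + δ • v ∈ interior (convexHull ℝ (A : Set Plane)) :=
      (hcont.continuousAt.eventually_mem (isOpen_interior.mem_nhds (by simpa using hpint))).filter_mono
        nhdsWithin_le_nhds
    have h1 : ∀ᶠ δ : ℝ in nhdsWithin 0 (Set.Ioi 0), δ < 1 :=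
      (eventually_lt_nhds zero_lt_one).filter_mono nhdsWithin_le_nhds
    obtain ⟨δ, a, b, c⟩ := (hev.and (Filter.Eventually.and self_mem_nhdsWithin h1)).exists
    exact ⟨δ, a, b, c⟩
  constructor
  · obtain ⟨w, hw, ho⟩ := h.exists_across hgen ht hne hr0 hr1 hr
    exact ⟨w, h.mem_starD.2 ⟨hw, ho⟩⟩
  · obtain ⟨w, hw, ho⟩ := h.exists_across hgen (a := v) (b := p) (c := c) (r := 1 - r)
      (by rwa [Finset.insert_comm]) (by intro h0; apply hne; unfold orient at *; linarith)
      (by linarith) (by linarith) (by rw [add_comm, sub_sub_cancel]; exact hr)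
    refine ⟨w, h.mem_starD.2 ⟨?_, ?_⟩⟩
    · rw [Finset.insert_comm] at hw; rwa [Finset.pair_comm w v]
    · unfold orient at *; linarith

lemma next_unique (h : IsTri A 𝒯) {v w w' : Plane} (h1 : (v, w) ∈ starD A 𝒯 p)
    (h2 : (v, w') ∈ starD A 𝒯 p) : w = w' := by
  rw [h.mem_starD] at h1 h2
  exact h.same_side h1.1 h2.1 h1.2 h2.2

lemma prev_unique (h : IsTri A 𝒯) {v u u' : Plane} (h1 : (u, v) ∈ starD A 𝒯 p)
    (h2 : (u', v) ∈ starD A 𝒯 p) : u = u' := by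
  rw [h.mem_starD] at h1 h2
  have aux : ∀ w, ({p, w, v} : Finset Plane) = {v, p, w} := by intro w; ext; simp; tauto
  rw [aux] at h1 h2
  refine h.same_side h1.1 h2.1 ?_ ?_
  · have := h1.2; unfold orient at *; linarith
  · have := h2.2; unfold orient at *; linarith

lemma starD_link (h : IsTri A 𝒯) {u w : Plane} (h1 : (u, w) ∈ starD A 𝒯 p) :
    u ∈ link A 𝒯 p ∧ w ∈ link A 𝒯 p := by
  rw [h.mem_starD] at h1
  rw [h.mem_link, h.mem_link]
  refine ⟨⟨?_, _, h1.1, by simp, by simp⟩, ⟨?_, _, h1.1, by simp, by simp⟩⟩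
  · rintro rfl; simp [orient_self₁] at h1
  · rintro rfl; simp [orient_self₃] at h1

lemma exists_starD (h : IsTri A 𝒯) (hgen : InGeneralPosition A) {t : Finset Plane}
    (ht : t ∈ 𝒯) (hp : p ∈ t) : ∃ u w, t = {p, u, w} ∧ (u, w) ∈ starD A 𝒯 p := by
  obtain ⟨v, hv, hvp⟩ : ∃ v ∈ t, v ≠ p :=
    Finset.exists_mem_ne (by rw [h.card t ht]; norm_num) p
  obtain ⟨c, rfl⟩ := Finset.eq_triple hp hv hvp (h.card t ht)
  rcases lt_or_gt_of_ne (h.orient_ne hgen ht) with ho | ho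
  · refine ⟨c, v, by rw [Finset.pair_comm], h.mem_starD.2 ⟨by rwa [Finset.pair_comm c v], ?_⟩⟩
    rw [orient_swap]; linarith
  · exact ⟨v, c, rfl, h.mem_starD.2 ⟨ht, ho⟩⟩

/-- No neighbour of `p` lies in the open cone at `p` spanned by a triangle of the star. -/
lemma link_empty_cone (h : IsTri A 𝒯) (hgen : InGeneralPosition A) {v w x : Plane}
    (hvw : (v, w) ∈ starD A 𝒯 p) (hx : x ∈ link A 𝒯 p) (h1 : 0 < orient p v x) :
    ¬ 0 < orient p x w := by
  intro h2
  rw [h.mem_starD] at hvw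
  obtain ⟨-, t, ht, hpt, hxt⟩ := h.mem_link.1 hx
  have hne : ({p, v, w} : Finset Plane) ≠ t := by
    rintro rfl
    simp only [Finset.mem_insert, Finset.mem_singleton] at hxt
    rcases hxt with rfl | rfl | rfl
    · simp [orient_self₃] at h1
    · simp [orient_self₂] at h1
    · simp [orient_self₂] at h2
  have hev : ∀ᶠ δ : ℝ in nhdsWithin 0 (Set.Ioi 0), 0 < orient v w ((1 - δ) • p + δ • x) := by
    apply Filter.Eventually.filter_mono nhdsWithin_le_nhds
    have hcont : Continuous fun δ : ℝ => orient v w ((1 - δ) • p + δ • x) :=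
      (continuous_orient v w).comp (by fun_prop)
    refine hcont.continuousAt.eventually_const_lt ?_
    beta_reduce
    rw [orient_comb _ _ _ _ _ _ (by ring), orient_rot]
    linarith [hvw.2]
  have hev1 : ∀ᶠ δ : ℝ in nhdsWithin 0 (Set.Ioi 0), δ < 1 :=
    (eventually_lt_nhds zero_lt_one).filter_mono nhdsWithin_le_nhds
  obtain ⟨δ, g1, g2, g3⟩ :=
    (hev.and (Filter.Eventually.and self_mem_nhdsWithin hev1)).exists
  have hδ : 0 < δ := g2
  have hd := h.disj' hgen hvw.1 ht hne
  rw [Set.disjoint_left] at hd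
  refine @hd ((1 - δ) • p + δ • x) ?_ ?_
  · have := mem_interior_tri (a := p) (b := v) (c := w) (x := (1 - δ) • p + δ • x) ?_ g1 ?_
    · simpa using this
    · rw [orient_comb _ _ _ _ _ _ (by ring), orient_self₃]
      have := mul_pos hδ h1; linarith
    · rw [orient_comb _ _ _ _ _ _ (by ring), orient_self₂, ← orient_rot w p x]
      have := mul_pos hδ h2; linarith
  · exact convex_convexHull ℝ _ (subset_convexHull ℝ _ hpt) (subset_convexHull ℝ _ hxt)
      (by linarith) hδ.le (by ring)

lemma card_link (h : IsTri A 𝒯) (hgen : InGeneralPosition A)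
    (hpint : p ∈ interior (convexHull ℝ (A : Set Plane))) :
    (link A 𝒯 p).card = (starD A 𝒯 p).card := by
  symm
  refine Finset.card_bij (fun e _ => e.1) (fun e he => (h.starD_link he).1) ?_ ?_
  · rintro ⟨u, w⟩ h1 ⟨u', w'⟩ h2 (rfl : u = u')
    rw [h.next_unique h1 h2]
  · intro v hv
    obtain ⟨w, hw⟩ := (h.exists_next hgen hpint hv).1
    exact ⟨_, hw, rfl⟩

/-- An interior vertex `p` of degree at least four has an edge `pv` whose two triangles `puv` and
`pvw` form a strictly convex quadrilateral, so that `pv` can be flipped to `uw`. -/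
lemma exists_flippable (h : IsTri A 𝒯) (hgen : InGeneralPosition A)
    (hpint : p ∈ interior (convexHull ℝ (A : Set Plane))) (hp : p ∈ A)
    (hcard : 4 ≤ (starD A 𝒯 p).card) :
    ∃ u v w, (u, v) ∈ starD A 𝒯 p ∧ (v, w) ∈ starD A 𝒯 p ∧ 0 < orient p u w ∧
      0 < orient u v w := by
  have h1 : ∀ v, ∃ w, v ∈ link A 𝒯 p → (v, w) ∈ starD A 𝒯 p := fun v => by
    by_cases hv : v ∈ link A 𝒯 p
    · obtain ⟨w, hw⟩ := (h.exists_next hgen hpint hv).1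
      exact ⟨w, fun _ => hw⟩
    · exact ⟨v, fun h => absurd h hv⟩
  have h2 : ∀ v, ∃ u, v ∈ link A 𝒯 p → (u, v) ∈ starD A 𝒯 p := fun v => by
    by_cases hv : v ∈ link A 𝒯 p
    · obtain ⟨w, hw⟩ := (h.exists_next hgen hpint hv).2
      exact ⟨w, fun _ => hw⟩
    · exact ⟨v, fun h => absurd h hv⟩
  choose σ hσ using h1
  choose ρ hρ using h2
  have hA : ∀ v ∈ link A 𝒯 p, v ∈ A := fun v hv => (Finset.mem_filter.1 hv).1
  have hnp : ∀ v ∈ link A 𝒯 p, v ≠ p := fun v hv => (h.mem_link.1 hv).1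
  obtain ⟨v, hv, ho1, ho2⟩ := exists_flip (V := link A 𝒯 p) (p := p) (σ := σ) (ρ := ρ)
    (fun v hv => (h.starD_link (hσ v hv)).2) (fun v hv => (h.starD_link (hρ v hv)).1)
    (fun v hv => h.next_unique (hσ _ (h.starD_link (hρ v hv)).1) (hρ v hv))
    (fun v hv => h.prev_unique (hρ _ (h.starD_link (hσ v hv)).2) (hσ v hv))
    (fun v hv => (h.mem_starD.1 (hσ v hv)).2)
    (fun v hv x hx hvx => h.link_empty_cone hgen (hσ v hv) hx hvx)
    (fun v hv w hw hne => orient_ne_zero hgen hp (hA v hv) (hA w hw) (hnp v hv).symm hne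
      (hnp w hw).symm)
    (fun v hv => by
      have g1 := h.mem_starD.1 (hσ v hv)
      have g2 := h.mem_starD.1 (hρ v hv)
      refine orient_ne_zero hgen (hA _ (h.starD_link (hρ v hv)).1) (hA v hv)
        (hA _ (h.starD_link (hσ v hv)).2) ?_ ?_ ?_
      · intro he; rw [he, orient_self₂] at g2; exact lt_irrefl _ g2.2
      · intro he; rw [← he, orient_self₂] at g1; exact lt_irrefl _ g1.2
      · intro he; rw [he] at g2
        have := g1.2; have := g2.2; rw [orient_swap] at this; linarith)
    (by rw [h.card_link hgen hpint]; exact hcard)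
  exact ⟨ρ v, v, σ v, hρ v hv, hσ v hv, ho1, ho2⟩

end IsTri

/-! ### Flipping an edge and removing a vertex of degree three -/

lemma card_of_orient {a b c : Plane} (h : orient a b c ≠ 0) :
    ({a, b, c} : Finset Plane).card = 3 := by
  refine Finset.card_eq_three.2 ⟨a, b, c, ?_, ?_, ?_, rfl⟩ <;> rintro rfl <;>
    simp [orient_self₁, orient_self₂, orient_self₃] at h

namespace IsTri
variable {A : Finset Plane} {𝒯 : Finset (Finset Plane)} {p : Plane}

/-- Flipping the edge `pv` to `uw`. -/
lemma flip (h : IsTri A 𝒯) (hgen : InGeneralPosition A) {u v w : Plane}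
    (h1 : (u, v) ∈ starD A 𝒯 p) (h2 : (v, w) ∈ starD A 𝒯 p) (h3 : 0 < orient p u w)
    (h4 : 0 < orient u v w) :
    IsTri A ((𝒯 \ {{p, u, v}, {p, v, w}}) ∪ {{p, u, w}, {u, v, w}}) := by
  rw [h.mem_starD] at h1 h2
  have hp : p ∈ A := h.sub _ h1.1 (by simp)
  have hu : u ∈ A := h.sub _ h1.1 (by simp)
  have hv : v ∈ A := h.sub _ h1.1 (by simp)
  have hw : w ∈ A := h.sub _ h2.1 (by simp)
  refine h.replace hgen ?_ rfl subset_rfl (fun t ht _ => h.sub t ht) ?_ ?_ ?_ ?_ ?_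
  · intro t ht
    simp only [Finset.mem_insert, Finset.mem_singleton] at ht
    rcases ht with rfl | rfl
    exacts [h1.1, h2.1]
  · intro t ht
    simp only [Finset.mem_insert, Finset.mem_singleton] at ht
    rcases ht with rfl | rfl <;> intro x hx <;>
      simp only [Finset.mem_insert, Finset.mem_singleton] at hx <;> rcases hx with rfl | rfl | rfl <;>
      assumption
  · intro t ht
    simp only [Finset.mem_insert, Finset.mem_singleton] at ht
    rcases ht with rfl | rfl
    exacts [card_of_orient h3.ne', card_of_orient h4.ne']
  · intro x
    have e1 := mem_quad h1.2 h4 (by rw [orient_rot]; exact h2.2)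
      (by rw [← orient_rot, ← orient_rot]; rw [orient_rot]; exact h3 : 0 < orient w p u) x
    have e2 := mem_quad h4 (by rw [orient_rot]; exact h2.2)
      (by rw [← orient_rot, ← orient_rot]; rw [orient_rot]; exact h3 : 0 < orient w p u) h1.2 x
    have e3 : ({p, u, w} : Set Plane) = {u, w, p} := by ext; simp; tauto
    simp only [Finset.mem_insert, Finset.mem_singleton, exists_eq_or_imp, exists_eq_left,
      Finset.coe_insert, Finset.coe_singleton]
    rw [e3]
    tauto
  · have key : Disjoint (interior (convexHull ℝ ((({p, u, w} : Finset Plane)) : Set Plane)))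
      (interior (convexHull ℝ ((({u, v, w} : Finset Plane)) : Set Plane))) := by
      refine disjoint_interior_of_line (a := u) (b := w) (c := p) ?_
        (fun x hx => convexHull_min ?_ (convex_orient_nonneg u w) hx)
        (fun x hx => convexHull_min ?_ (convex_orient_nonneg w u) hx)
      · rw [orient_rot]; exact h3.ne'
      all_goals
        rw [Finset.coe_insert, Finset.coe_insert, Finset.coe_singleton]
        rintro y (rfl | rfl | rfl) <;>
        · rw [Set.mem_ofPred_eq]; unfold orient at *; linarith
    intro s hs t ht hst
    simp only [Finset.mem_insert, Finset.mem_singleton] at hs ht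
    rcases hs with rfl | rfl <;> rcases ht with rfl | rfl
    · exact absurd rfl hst
    · exact key
    · exact key.symm
    · exact absurd rfl hst
  · simp only [Finset.mem_insert, Finset.mem_singleton, exists_eq_or_imp, exists_eq_left]
    rintro t (rfl | rfl) a ha - <;> simp only [Finset.mem_insert, Finset.mem_singleton] at ha <;> tauto

/-- The new triangle `uvw` is not in `𝒯`: it is on the same side of `uv` as `puv`. -/
lemma flip_fresh (h : IsTri A 𝒯) {u v w : Plane} (h1 : (u, v) ∈ starD A 𝒯 p)
    (h4 : 0 < orient u v w) (hpw : p ≠ w) : {u, v, w} ∉ 𝒯 := by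
  intro ht
  rw [h.mem_starD] at h1
  refine hpw (h.same_side (a := u) (b := v) ?_ ht ?_ h4)
  · convert h1.1 using 1; ext; simp; tauto
  · rw [orient_rot]; exact h1.2

/-- Effect of flipping `pv` to `uw`: in the star of `p` the edges `(u, v)` and `(v, w)` are replaced
by `(u, w)`, and `uvw` is the only new triangle that avoids `p`. -/
lemma flip_star (h : IsTri A 𝒯) (hgen : InGeneralPosition A) {u v w : Plane}
    (h1 : (u, v) ∈ starD A 𝒯 p) (h2 : (v, w) ∈ starD A 𝒯 p) (h3 : 0 < orient p u w)
    (h4 : 0 < orient u v w) {𝒯₁ : Finset (Finset Plane)}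
    (hT : 𝒯₁ = (𝒯 \ {{p, u, v}, {p, v, w}}) ∪ {{p, u, w}, {u, v, w}}) :
    (starD A 𝒯 p).val + {(u, w)} = (starD A 𝒯₁ p).val + {(u, v), (v, w)} ∧
      𝒯.filter (p ∉ ·) = 𝒯₁.filter (p ∉ ·) \ {{u, v, w}} := by
  have h' : IsTri A 𝒯₁ := hT ▸ h.flip hgen h1 h2 h3 h4
  have m1 := h.mem_starD.1 h1
  have m2 := h.mem_starD.1 h2
  have hpu : p ≠ u := by rintro rfl; simp [orient_self₁] at h3
  have hpw : p ≠ w := by rintro rfl; simp [orient_self₃] at h3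
  have huw : u ≠ w := by rintro rfl; simp [orient_self₂] at h3
  have huv : u ≠ v := by rintro rfl; simp [orient_self₁] at h4
  have hvw : v ≠ w := by rintro rfl; simp [orient_self₂] at h4
  have hpv : p ≠ v := by rintro rfl; simp [orient_self₃] at m1
  have hpn : p ∉ ({u, v, w} : Finset Plane) := by simp [hpu, hpv, hpw]
  have hfr := h.flip_fresh h1 h4 hpw
  constructor
  · have hn : (u, w) ∉ starD A 𝒯 p := fun hn => hvw (h.next_unique h1 hn)
    have e1 : (starD A 𝒯 p).val + {(u, w)} = (insert (u, w) (starD A 𝒯 p)).val := by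
      rw [Finset.insert_val_of_notMem hn, add_comm, Multiset.singleton_add]
    have k2 : (u, w) ∈ starD A 𝒯₁ p := h'.mem_starD.2 ⟨by rw [hT]; simp, h3⟩
    have n1 : (u, v) ∉ starD A 𝒯₁ p := fun hn => hvw (h'.next_unique hn k2)
    have n2 : (v, w) ∉ starD A 𝒯₁ p := fun hn => huv.symm (h'.prev_unique hn k2)
    have e2 : (starD A 𝒯₁ p).val + {(u, v), (v, w)} =
        (insert (u, v) (insert (v, w) (starD A 𝒯₁ p))).val := by
      rw [Finset.insert_val_of_notMem (by simp [n1, huv]), Finset.insert_val_of_notMem n2, add_comm,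
        Multiset.insert_eq_cons, Multiset.cons_add, Multiset.singleton_add]
    rw [e1, e2]
    congr 1
    ext ⟨x, y⟩
    simp only [Finset.mem_insert]
    by_cases q1 : (x, y) = (u, w)
    · simp [q1, k2]
    by_cases q2 : (x, y) = (u, v)
    · simp [q2, h1]
    by_cases q3 : (x, y) = (v, w)
    · simp [q3, h2]
    simp only [q1, q2, q3, false_or, h.mem_starD, h'.mem_starD]
    simp only [hT, Finset.mem_union, Finset.mem_sdiff, Finset.mem_insert, Finset.mem_singleton]
    refine and_congr_left fun ho => ?_
    have hpx : x ≠ p := by rintro rfl; simp [orient_self₁] at ho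
    have hpy : y ≠ p := by rintro rfl; simp [orient_self₃] at ho
    have aux : ∀ r s : Plane, r ≠ p → s ≠ p → 0 < orient p r s → (x, y) ≠ (r, s) →
        ({p, x, y} : Finset Plane) ≠ {p, r, s} := by
      intro r s hr hs hrs hne he
      have hx : x ∈ ({p, r, s} : Finset Plane) := by rw [← he]; simp
      have hy : y ∈ ({p, r, s} : Finset Plane) := by rw [← he]; simp
      simp only [Finset.mem_insert, Finset.mem_singleton, hpx, hpy, false_or] at hx hy
      rcases hx with rfl | rfl <;> rcases hy with rfl | rfl
      · simp [orient_self₂] at ho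
      · exact hne rfl
      · rw [orient_swap] at ho; linarith
      · simp [orient_self₂] at ho
    have a1 := aux u w hpu.symm hpw.symm h3 q1
    have a2 := aux u v hpu.symm hpv.symm m1.2 q2
    have a3 := aux v w hpv.symm hpw.symm m2.2 q3
    have a4 : ({p, x, y} : Finset Plane) ≠ {u, v, w} := by
      intro he; rw [← he] at hpn; simp at hpn
    simp [a1, a2, a3, a4]
  · ext t
    simp only [hT, Finset.mem_filter, Finset.mem_sdiff, Finset.mem_union, Finset.mem_insert,
      Finset.mem_singleton]
    constructor
    · rintro ⟨ht, hpt⟩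
      refine ⟨⟨Or.inl ⟨ht, ?_⟩, hpt⟩, ?_⟩
      · rintro (rfl | rfl) <;> simp at hpt
      · rintro rfl; exact hfr ht
    · rintro ⟨⟨ht | rfl | rfl, hpt⟩, hne⟩
      · exact ⟨ht.1, hpt⟩
      · simp at hpt
      · exact absurd rfl hne

lemma three_cycle (h : IsTri A 𝒯) (hgen : InGeneralPosition A)
    (hpint : p ∈ interior (convexHull ℝ (A : Set Plane))) (hcard : (starD A 𝒯 p).card = 3) :
    ∃ a b c, starD A 𝒯 p = {(a, b), (b, c), (c, a)} := by
  obtain ⟨⟨a, b⟩, hab⟩ : (starD A 𝒯 p).Nonempty := Finset.card_pos.1 (by omega)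
  obtain ⟨c, hbc⟩ := (h.exists_next hgen hpint (h.starD_link hab).2).1
  obtain ⟨d, hcd⟩ := (h.exists_next hgen hpint (h.starD_link hbc).2).1
  have m1 := (h.mem_starD.1 hab).2
  have m2 := (h.mem_starD.1 hbc).2
  have m3 := (h.mem_starD.1 hcd).2
  have n1 : a ≠ b := by rintro rfl; simp [orient_self₂] at m1
  have n2 : b ≠ c := by rintro rfl; simp [orient_self₂] at m2
  have n3 : a ≠ c := by rintro rfl; rw [orient_swap] at m1; linarith
  have n4 : d ≠ c := by rintro rfl; simp [orient_self₂] at m3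
  have n5 : d ≠ b := by rintro rfl; rw [orient_swap] at m3; linarith
  have hl : ({a, b, c} : Finset Plane) = link A 𝒯 p := by
    refine Finset.eq_of_subset_of_card_le ?_ ?_
    · intro x hx
      simp only [Finset.mem_insert, Finset.mem_singleton] at hx
      rcases hx with rfl | rfl | rfl
      exacts [(h.starD_link hab).1, (h.starD_link hbc).1, (h.starD_link hcd).1]
    · rw [h.card_link hgen hpint, hcard, Finset.card_eq_three.2 ⟨a, b, c, n1, n3, n2, rfl⟩]
  have hd := (h.starD_link hcd).2
  rw [← hl] at hd
  simp only [Finset.mem_insert, Finset.mem_singleton, n4, n5, or_false] at hd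
  subst hd
  refine ⟨d, b, c, (Finset.eq_of_subset_of_card_le ?_ ?_).symm⟩
  · intro x hx
    simp only [Finset.mem_insert, Finset.mem_singleton] at hx
    rcases hx with rfl | rfl | rfl <;> assumption
  · rw [hcard, Finset.card_eq_three.2 ⟨(d, b), (b, c), (c, d), by simp [n1], by simp [n3],
      by simp [n2], rfl⟩]

/-- Removing a vertex `p` of degree three: its three triangles are replaced by the triangle `abc` of
its neighbours. -/
lemma remove (h : IsTri A 𝒯) (hgen : InGeneralPosition A) {a b c : Plane}
    (hs : starD A 𝒯 p = {(a, b), (b, c), (c, a)}) :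
    0 < orient p a b ∧ 0 < orient p b c ∧ 0 < orient p c a ∧
    IsTri (A.erase p) ((𝒯 \ {{p, a, b}, {p, b, c}, {p, c, a}}) ∪ {{a, b, c}}) ∧
    𝒯.filter (p ∉ ·) =
      ((𝒯 \ {{p, a, b}, {p, b, c}, {p, c, a}}) ∪ {{a, b, c}}) \ {{a, b, c}} := by
  have h1 : (a, b) ∈ starD A 𝒯 p := by rw [hs]; simp
  have h2 : (b, c) ∈ starD A 𝒯 p := by rw [hs]; simp
  have h3 : (c, a) ∈ starD A 𝒯 p := by rw [hs]; simp
  have hR : ∀ t ∈ 𝒯, p ∈ t → t ∈ ({{p, a, b}, {p, b, c}, {p, c, a}} : Finset (Finset Plane)) := by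
    intro t ht hpt
    obtain ⟨u, w, rfl, huw⟩ := h.exists_starD hgen ht hpt
    rw [hs] at huw
    simp only [Finset.mem_insert, Finset.mem_singleton, Prod.mk.injEq] at huw
    rcases huw with ⟨rfl, rfl⟩ | ⟨rfl, rfl⟩ | ⟨rfl, rfl⟩ <;> simp
  have m1 := h.mem_starD.1 h1
  have m2 := h.mem_starD.1 h2
  have m3 := h.mem_starD.1 h3
  have habc : 0 < orient a b c := by
    have := m1.2; have := m2.2; have := m3.2
    unfold orient at *; linarith
  have hpa : p ≠ a := by rintro rfl; simp [orient_self₁] at m1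
  have hpb : p ≠ b := by rintro rfl; simp [orient_self₁] at m2
  have hpc : p ≠ c := by rintro rfl; simp [orient_self₁] at m3
  have ha : a ∈ A := h.sub _ m1.1 (by simp)
  have hb : b ∈ A := h.sub _ m1.1 (by simp)
  have hc : c ∈ A := h.sub _ m2.1 (by simp)
  have hfr := h.flip_fresh h1 habc hpc
  have hsub : ({a, b, c} : Finset Plane) ⊆ A.erase p := by
    intro x hx
    simp only [Finset.mem_insert, Finset.mem_singleton] at hx
    rcases hx with rfl | rfl | rfl <;> simp [*, Ne.symm hpa, Ne.symm hpb, Ne.symm hpc]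
  have hpc' : p ∈ convexHull ℝ ({a, b, c} : Set Plane) := by
    rw [mem_tri_iff habc]
    have := m1.2; have := m2.2; have := m3.2
    refine ⟨?_, ?_, ?_⟩ <;> unfold orient at * <;> linarith
  refine ⟨m1.2, m2.2, m3.2, ?_, ?_⟩
  · refine h.replace hgen ?_ ?_ (Finset.erase_subset _ _) ?_ ?_ ?_ ?_ ?_ ?_
    · intro t ht
      simp only [Finset.mem_insert, Finset.mem_singleton] at ht
      rcases ht with rfl | rfl | rfl
      exacts [m1.1, m2.1, m3.1]
    · refine (convexHull_mono (by simp)).antisymm (convexHull_min ?_ (convex_convexHull ℝ _))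
      intro x hx
      by_cases hxp : x = p
      · subst hxp
        refine convexHull_mono ?_ hpc'
        have := Finset.coe_subset.2 hsub
        simpa only [Finset.coe_insert, Finset.coe_singleton] using this
      · exact subset_convexHull ℝ _ (by simpa [hxp] using hx)
    · intro t ht htR x hx
      refine Finset.mem_erase.2 ⟨?_, h.sub t ht hx⟩
      rintro rfl; exact htR (hR t ht hx)
    · intro t ht
      rw [Finset.mem_singleton.1 ht]; exact hsub
    · intro t ht
      rw [Finset.mem_singleton.1 ht]; exact card_of_orient habc.ne'
    · intro x
      have := mem_three m1.2 m2.2 m3.2 x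
      simpa only [Finset.mem_insert, Finset.mem_singleton, exists_eq_or_imp, exists_eq_left,
        Finset.coe_insert, Finset.coe_singleton] using this
    · intro s hs t ht hst
      rw [Finset.mem_singleton] at hs ht
      exact absurd (hs.trans ht.symm) hst
    · intro t ht x hx hxA
      have hxp := (Finset.mem_erase.1 hxA).1
      refine ⟨_, Finset.mem_singleton_self _, ?_⟩
      simp only [Finset.mem_insert, Finset.mem_singleton] at ht
      rcases ht with rfl | rfl | rfl <;>
      · simp only [Finset.mem_insert, Finset.mem_singleton, hxp, false_or] at hx ⊢
        tauto
  · ext t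
    simp only [Finset.mem_filter, Finset.mem_sdiff, Finset.mem_union, Finset.mem_singleton]
    constructor
    · rintro ⟨ht, hpt⟩
      refine ⟨Or.inl ⟨ht, ?_⟩, ?_⟩
      · simp only [Finset.mem_insert, Finset.mem_singleton]
        rintro (rfl | rfl | rfl) <;> simp at hpt
      · rintro rfl; exact hfr ht
    · rintro ⟨⟨ht, hR'⟩ | rfl, hne⟩
      · exact ⟨ht, fun hpt => hR' (hR t ht hpt)⟩
      · exact absurd rfl hne

end IsTri

/-! ### Encoding by three binary trees -/

/-- The third vertex of the triangle of `𝒯` on the right of the directed edge `(u, w)`; the junk value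
`u` if there is none. -/
noncomputable def apex (𝒯 : Finset (Finset Plane)) (u w : Plane) : Plane :=
  if h : ∃ v, {u, v, w} ∈ 𝒯 ∧ 0 < orient u v w then h.choose else u

/-- Start at the directed edge `(u, w)` and repeatedly cross edges into the triangle on their right,
following the shape of a binary tree: a node crosses the edge and branches to the two other sides
of the triangle. `leaves` is the multiset of edges at which the walk stops. -/
noncomputable def leaves (𝒯 : Finset (Finset Plane)) :
    BinaryTree Unit → Plane → Plane → Multiset (Plane × Plane)
  | .nil, u, w => {(u, w)}
  | .node _ l r, u, w => leaves 𝒯 l u (apex 𝒯 u w) + leaves 𝒯 r (apex 𝒯 u w) w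

/-- The triangles crossed by the walk of `leaves`. -/
noncomputable def removed (𝒯 : Finset (Finset Plane)) :
    BinaryTree Unit → Plane → Plane → Finset (Finset Plane)
  | .nil, _, _ => ∅
  | .node _ l r, u, w =>
    insert {u, apex 𝒯 u w, w} (removed 𝒯 l u (apex 𝒯 u w) ∪ removed 𝒯 r (apex 𝒯 u w) w)

/-- The vertices, in counterclockwise order, of the triangle of `𝒯` that contains `p` in its interior.
The order is fixed up to rotation, and a rotation is chosen; `(p, p, p)` is a junk value. -/
noncomputable def root (𝒯 : Finset (Finset Plane)) (p : Plane) : Plane × Plane × Plane :=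
  if h : ∃ e : Plane × Plane × Plane, {e.1, e.2.1, e.2.2} ∈ 𝒯 ∧ 0 < orient e.1 e.2.1 p ∧
    0 < orient e.2.1 e.2.2 p ∧ 0 < orient e.2.2 e.1 p then h.choose else (p, p, p)

lemma IsTri.apex_eq {A : Finset Plane} {𝒯 : Finset (Finset Plane)} (h : IsTri A 𝒯) {u v w : Plane}
    (hv : {u, v, w} ∈ 𝒯) (ho : 0 < orient u v w) : apex 𝒯 u w = v := by
  have hex : ∃ v, {u, v, w} ∈ 𝒯 ∧ 0 < orient u v w := ⟨v, hv, ho⟩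
  have he := hex.choose_spec
  rw [apex, dif_pos hex]
  have aux : ∀ x : Plane, ({u, x, w} : Finset Plane) = {w, u, x} := by intro x; ext; simp; tauto
  rw [aux] at he hv
  refine h.same_side he.1 hv ?_ ?_
  · rw [← orient_rot]; exact he.2
  · rw [← orient_rot]; exact ho

/-- Replacing a leaf `(u, w)` of a tree by a node with two leaves crosses the triangle `uvw`, where
`v` is the apex over `(u, w)`. -/
lemma exists_graft {𝒯 : Finset (Finset Plane)} {u v w : Plane} (hv : apex 𝒯 u w = v) :
    ∀ (τ : BinaryTree Unit) (x y : Plane), (u, w) ∈ leaves 𝒯 τ x y →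
      ∃ τ' : BinaryTree Unit, τ'.numNodes = τ.numNodes + 1 ∧
        leaves 𝒯 τ' x y + {(u, w)} = leaves 𝒯 τ x y + {(u, v), (v, w)} ∧
        removed 𝒯 τ' x y = insert {u, v, w} (removed 𝒯 τ x y) := by
  intro τ
  induction τ with
  | nil =>
    intro x y h
    simp only [leaves, Multiset.mem_singleton, Prod.mk.injEq] at h
    obtain ⟨rfl, rfl⟩ := h
    refine ⟨.node () .nil .nil, rfl, ?_, ?_⟩
    · simp only [leaves, hv]
      rw [add_comm]
      rfl
    · simp [removed, hv]
  | node a l r ihl ihr =>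
    intro x y h
    simp only [leaves, Multiset.mem_add] at h
    rcases h with h | h
    · obtain ⟨τ', h1, h2, h3⟩ := ihl _ _ h
      refine ⟨.node a τ' r, ?_, ?_, ?_⟩
      · simp only [BinaryTree.numNodes, h1]; omega
      · simp only [leaves]
        rw [add_right_comm, h2, add_right_comm]
      · simp only [removed, h3]
        rw [Finset.insert_union, Finset.insert_comm]
    · obtain ⟨τ', h1, h2, h3⟩ := ihr _ _ h
      refine ⟨.node a l τ', ?_, ?_, ?_⟩
      · simp only [BinaryTree.numNodes, h1]; omega
      · simp only [leaves]
        rw [add_assoc, h2, add_assoc]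
      · simp only [removed, h3]
        rw [Finset.union_insert, Finset.insert_comm]

/-- The triangulation `𝒯` of `A` is encoded by the triangulation `𝒯'` of `A.erase p` and three
binary trees, one for each side of the triangle `root 𝒯' p`: the star of `p` in `𝒯` is bounded by
the leaves of the three trees (`star`), and outside of it `𝒯` consists of the triangles of `𝒯'`
other than the root triangle and those crossed by the trees (`rest`). -/
structure Encodes (A : Finset Plane) (p : Plane) (𝒯 𝒯' : Finset (Finset Plane))
    (τ : BinaryTree Unit × BinaryTree Unit × BinaryTree Unit) : Prop where
  star : (starD A 𝒯 p).val = leaves 𝒯' τ.1 (root 𝒯' p).1 (root 𝒯' p).2.1 +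
    leaves 𝒯' τ.2.1 (root 𝒯' p).2.1 (root 𝒯' p).2.2 +
    leaves 𝒯' τ.2.2 (root 𝒯' p).2.2 (root 𝒯' p).1
  rest : 𝒯.filter (p ∉ ·) = 𝒯' \ insert {(root 𝒯' p).1, (root 𝒯' p).2.1, (root 𝒯' p).2.2}
    (removed 𝒯' τ.1 (root 𝒯' p).1 (root 𝒯' p).2.1 ∪
      (removed 𝒯' τ.2.1 (root 𝒯' p).2.1 (root 𝒯' p).2.2 ∪
        removed 𝒯' τ.2.2 (root 𝒯' p).2.2 (root 𝒯' p).1))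

/-- The code of a triangulation determines it. -/
lemma Encodes.eq {A : Finset Plane} (hgen : InGeneralPosition A) {p : Plane}
    {𝒯₁ 𝒯₂ 𝒯' : Finset (Finset Plane)} {τ : BinaryTree Unit × BinaryTree Unit × BinaryTree Unit}
    (h₁ : IsTri A 𝒯₁) (h₂ : IsTri A 𝒯₂) (e₁ : Encodes A p 𝒯₁ 𝒯' τ) (e₂ : Encodes A p 𝒯₂ 𝒯' τ) :
    𝒯₁ = 𝒯₂ := by
  have hs : starD A 𝒯₁ p = starD A 𝒯₂ p := Finset.val_injective (e₁.star.trans e₂.star.symm)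
  have hr := e₁.rest.trans e₂.rest.symm
  have key : ∀ 𝒯, IsTri A 𝒯 → ∀ t, t ∈ 𝒯 ↔ t ∈ 𝒯.filter (p ∉ ·) ∨
      ∃ u w, t = {p, u, w} ∧ (u, w) ∈ starD A 𝒯 p := by
    intro 𝒯 h t
    constructor
    · intro ht
      by_cases hp : p ∈ t
      · exact Or.inr (h.exists_starD hgen ht hp)
      · exact Or.inl (Finset.mem_filter.2 ⟨ht, hp⟩)
    · rintro (ht | ⟨u, w, rfl, huw⟩)
      · exact (Finset.mem_filter.1 ht).1
      · exact (h.mem_starD.1 huw).1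
  ext t
  rw [key _ h₁, key _ h₂, hs, hr]

/-- A triangulation in which `p` has degree three is encoded by three empty trees. -/
lemma encodes_base {A : Finset Plane} (hgen : InGeneralPosition A) {p : Plane}
    {𝒯 : Finset (Finset Plane)} (h : IsTri A 𝒯)
    (hpint : p ∈ interior (convexHull ℝ (A : Set Plane))) (hcard : (starD A 𝒯 p).card = 3) :
    ∃ 𝒯', IsTri (A.erase p) 𝒯' ∧ Encodes A p 𝒯 𝒯' (.nil, .nil, .nil) := by
  obtain ⟨a, b, c, hs⟩ := h.three_cycle hgen hpint hcard
  obtain ⟨h1, h2, h3, hT', hrest⟩ := h.remove hgen hs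
  set 𝒯' := (𝒯 \ {{p, a, b}, {p, b, c}, {p, c, a}}) ∪ {{a, b, c}} with hdef
  refine ⟨𝒯', hT', ?_⟩
  have habc : {a, b, c} ∈ 𝒯' := by rw [hdef]; simp
  have g1 : 0 < orient a b p := by rw [orient_rot]; exact h1
  have g2 : 0 < orient b c p := by rw [orient_rot]; exact h2
  have g3 : 0 < orient c a p := by rw [orient_rot]; exact h3
  have hex : ∃ e : Plane × Plane × Plane, {e.1, e.2.1, e.2.2} ∈ 𝒯' ∧ 0 < orient e.1 e.2.1 p ∧
    0 < orient e.2.1 e.2.2 p ∧ 0 < orient e.2.2 e.1 p := ⟨(a, b, c), habc, g1, g2, g3⟩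
  have hr : root 𝒯' p = hex.choose := dif_pos hex
  have hspec := hex.choose_spec
  rw [← hr] at hspec
  generalize hroot : root 𝒯' p = r at hspec
  obtain ⟨a', b', c'⟩ := r
  obtain ⟨habc', g1', g2', g3'⟩ := hspec
  have heq : ({a', b', c'} : Finset Plane) = {a, b, c} := by
    refine hT'.eq_of_mem_interior (x := p) habc' habc ?_ ?_
    · simpa using mem_interior_tri g1' g2' g3'
    · simpa using mem_interior_tri g1 g2 g3
  have hcyc : (a' = a ∧ b' = b ∧ c' = c) ∨ (a' = b ∧ b' = c ∧ c' = a) ∨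
      (a' = c ∧ b' = a ∧ c' = b) := by
    have ha : a' ∈ ({a, b, c} : Finset Plane) := by rw [← heq]; simp
    have hb : b' ∈ ({a, b, c} : Finset Plane) := by rw [← heq]; simp
    have hc : c' ∈ ({a, b, c} : Finset Plane) := by rw [← heq]; simp
    simp only [Finset.mem_insert, Finset.mem_singleton] at ha hb hc
    simp only at g1' g2' g3'
    rcases ha with ha | ha | ha <;> rcases hb with hb | hb | hb <;>
      rcases hc with hc | hc | hc <;> rw [ha, hb] at g1' <;> rw [hb, hc] at g2' <;>
      rw [hc, ha] at g3' <;>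
      first
      | exact Or.inl ⟨ha, hb, hc⟩
      | exact Or.inr (Or.inl ⟨ha, hb, hc⟩)
      | exact Or.inr (Or.inr ⟨ha, hb, hc⟩)
      | (exfalso; unfold orient at *; linarith)
  constructor
  · rw [hroot, hs]
    have n1 : a ≠ b := by rintro rfl; simp [orient_self₁] at g1
    have n2 : b ≠ c := by rintro rfl; simp [orient_self₁] at g2
    have n3 : c ≠ a := by rintro rfl; simp [orient_self₁] at g3
    have hval : ({(a, b), (b, c), (c, a)} : Finset (Plane × Plane)).val =
        {(a, b)} + {(b, c)} + {(c, a)} := by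
      rw [Finset.insert_val_of_notMem (by simp [n1, n3.symm]),
        Finset.insert_val_of_notMem (by simp [n2]), Finset.singleton_val]
      rfl
    rw [hval]
    simp only [leaves]
    rcases hcyc with ⟨rfl, rfl, rfl⟩ | ⟨rfl, rfl, rfl⟩ | ⟨rfl, rfl, rfl⟩
    · rfl
    · abel
    · abel
  · rw [hroot]
    simp only [removed, heq, Finset.union_empty]
    exact hrest

/-- If `𝒯₁` arises from `𝒯` by flipping `pv` to `uw`, a code of `𝒯₁` yields a code of `𝒯` with one more
node, grafted at the leaf `(u, w)`. -/
lemma encodes_step {A : Finset Plane} {p : Plane} {𝒯 𝒯₁ 𝒯' : Finset (Finset Plane)}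
    {τ : BinaryTree Unit × BinaryTree Unit × BinaryTree Unit} (h' : IsTri (A.erase p) 𝒯')
    (e : Encodes A p 𝒯₁ 𝒯' τ) {u v w : Plane} (ho : 0 < orient u v w)
    (hs : (starD A 𝒯 p).val + {(u, w)} = (starD A 𝒯₁ p).val + {(u, v), (v, w)})
    (hr : 𝒯.filter (p ∉ ·) = 𝒯₁.filter (p ∉ ·) \ {{u, v, w}})
    (h1 : (u, w) ∈ starD A 𝒯₁ p) (h2 : {u, v, w} ∈ 𝒯₁.filter (p ∉ ·)) :
    ∃ τ', τ'.1.numNodes + τ'.2.1.numNodes + τ'.2.2.numNodes =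
      τ.1.numNodes + τ.2.1.numNodes + τ.2.2.numNodes + 1 ∧ Encodes A p 𝒯 𝒯' τ' := by
  obtain ⟨t1, t2, t3⟩ := τ
  obtain ⟨es, er⟩ := e
  have hapex : apex 𝒯' u w = v := by
    rw [er] at h2
    exact h'.apex_eq (Finset.mem_sdiff.1 h2).1 ho
  rw [← Finset.mem_val, es, Multiset.mem_add, Multiset.mem_add] at h1
  rw [es] at hs
  rw [er] at hr
  rcases h1 with (h1 | h1) | h1
  · obtain ⟨t, k1, k2, k3⟩ := exists_graft hapex _ _ _ h1
    refine ⟨(t, t2, t3), by simp only [k1]; omega, ?_, ?_⟩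
    · rw [← add_left_inj {(u, w)}, hs]
      dsimp only at k2 ⊢
      rw [add_right_comm _ _ {(u, w)}, add_right_comm _ _ {(u, w)}, k2]
      simp only [add_assoc, add_comm, add_left_comm]
    · rw [hr, k3]; ext; simp only [Finset.mem_sdiff, Finset.mem_insert, Finset.mem_union,
        Finset.mem_singleton]; tauto
  · obtain ⟨t, k1, k2, k3⟩ := exists_graft hapex _ _ _ h1
    refine ⟨(t1, t, t3), by simp only [k1]; omega, ?_, ?_⟩
    · rw [← add_left_inj {(u, w)}, hs]
      dsimp only at k2 ⊢
      rw [add_right_comm _ _ {(u, w)}, add_assoc _ _ {(u, w)}, k2]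
      simp only [add_assoc, add_comm, add_left_comm]
    · rw [hr, k3]; ext; simp only [Finset.mem_sdiff, Finset.mem_insert, Finset.mem_union,
        Finset.mem_singleton]; tauto
  · obtain ⟨t, k1, k2, k3⟩ := exists_graft hapex _ _ _ h1
    refine ⟨(t1, t2, t), by simp only [k1]; omega, ?_, ?_⟩
    · rw [← add_left_inj {(u, w)}, hs]
      dsimp only at k2 ⊢
      rw [add_assoc _ _ {(u, w)}, k2, add_assoc]
    · rw [hr, k3]; ext; simp only [Finset.mem_sdiff, Finset.mem_insert, Finset.mem_union,
        Finset.mem_singleton]; tauto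

/-- A triangulation in which `p` has degree `n + 3` is encoded by a triangulation of `A.erase p` and
three trees with `n` nodes in total. -/
lemma exists_encodes {A : Finset Plane} (hgen : InGeneralPosition A) {p : Plane} (hp : p ∈ A)
    (hpint : p ∈ interior (convexHull ℝ (A : Set Plane))) (n : ℕ) :
    ∀ 𝒯, IsTri A 𝒯 → (starD A 𝒯 p).card = n + 3 →
    ∃ 𝒯' τ, IsTri (A.erase p) 𝒯' ∧
      τ.1.numNodes + τ.2.1.numNodes + τ.2.2.numNodes = n ∧ Encodes A p 𝒯 𝒯' τ := by
  induction n with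
  | zero =>
    intro 𝒯 h hcard
    obtain ⟨𝒯', h', e⟩ := encodes_base hgen h hpint (by omega)
    exact ⟨𝒯', _, h', rfl, e⟩
  | succ n ih =>
    intro 𝒯 h hcard
    obtain ⟨u, v, w, h1, h2, h3, h4⟩ := h.exists_flippable hgen hpint hp (by omega)
    set 𝒯₁ := (𝒯 \ {{p, u, v}, {p, v, w}}) ∪ {{p, u, w}, {u, v, w}} with hdef
    have hT₁ : IsTri A 𝒯₁ := h.flip hgen h1 h2 h3 h4
    obtain ⟨hs, hr⟩ := h.flip_star hgen h1 h2 h3 h4 hdef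
    have hc := congrArg Multiset.card hs
    simp only [Multiset.card_add, Finset.card_val, Multiset.card_singleton, Multiset.card_pair]
      at hc
    obtain ⟨𝒯', τ, h', hn, e⟩ := ih 𝒯₁ hT₁ (by omega)
    have k1 : (u, w) ∈ starD A 𝒯₁ p := hT₁.mem_starD.2 ⟨by rw [hdef]; simp, h3⟩
    have k2 : {u, v, w} ∈ 𝒯₁.filter (p ∉ ·) := by
      have m1 := (h.mem_starD.1 h1).2
      have m2 := (h.mem_starD.1 h2).2
      refine Finset.mem_filter.2 ⟨by rw [hdef]; simp, ?_⟩
      simp only [Finset.mem_insert, Finset.mem_singleton, not_or]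
      refine ⟨?_, ?_, ?_⟩ <;> rintro rfl
      · simp [orient_self₁] at h3
      · simp [orient_self₁] at m2
      · simp [orient_self₃] at h3
    obtain ⟨τ', hn', e'⟩ := encodes_step h' e h4 hs hr k1 k2
    exact ⟨𝒯', τ', h', by omega, e'⟩

/-! ### Counting -/

/-- The triples of binary trees with `n` nodes in total. -/
def shapes (n : ℕ) :
    Finset (BinaryTree Unit × BinaryTree Unit × BinaryTree Unit) :=
  (Finset.HasAntidiagonal.antidiagonal n).biUnion fun e => BinaryTree.treesOfNumNodesEq e.1 ×ˢ
    (Finset.HasAntidiagonal.antidiagonal e.2).biUnion fun f =>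
      BinaryTree.treesOfNumNodesEq f.1 ×ˢ BinaryTree.treesOfNumNodesEq f.2

lemma mem_shapes {n : ℕ} {τ : BinaryTree Unit × BinaryTree Unit × BinaryTree Unit}
    (h : τ.1.numNodes + τ.2.1.numNodes + τ.2.2.numNodes = n) : τ ∈ shapes n := by
  simp only [shapes, Finset.mem_biUnion, Finset.HasAntidiagonal.mem_antidiagonal, Finset.mem_product,
    BinaryTree.mem_treesOfNumNodesEq, Prod.exists]
  exact ⟨_, _, by rw [← h, add_assoc], rfl, _, _, rfl, rfl, rfl⟩

/-- By the recursion `C (n + 2) = ∑ C a * C b` over `a + b = n + 1`, omitting the term with `b = 0`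
and splitting `C b` once more for `b ≥ 1`. -/
lemma card_shapes_le (n : ℕ) : (shapes n).card ≤ catalan (n + 2) - catalan (n + 1) := by
  have h1 : catalan (n + 2) = catalan (n + 1) +
      ∑ e ∈ Finset.HasAntidiagonal.antidiagonal n, catalan e.1 * catalan (e.2 + 1) := by
    rw [catalan_succ', Finset.Nat.antidiagonal_succ']
    simp
  rw [h1, Nat.add_sub_cancel_left]
  refine Finset.card_biUnion_le.trans (Finset.sum_le_sum fun e _ => ?_)
  rw [Finset.card_product, BinaryTree.treesOfNumNodesEq_card_eq_catalan, catalan_succ']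
  refine Nat.mul_le_mul_left _ (Finset.card_biUnion_le.trans (Finset.sum_le_sum fun f _ => ?_))
  rw [Finset.card_product, BinaryTree.treesOfNumNodesEq_card_eq_catalan,
    BinaryTree.treesOfNumNodesEq_card_eq_catalan]

/-- The degree of an interior vertex is the number of triangles at it, as each edge at `p` starts
exactly one of these triangles. -/
lemma degree_eq {A : Finset Plane} (hgen : InGeneralPosition A) {p : Plane}
    (hpint : p ∈ interior (convexHull ℝ (A : Set Plane))) {T : SimplicialComplex ℝ Plane}
    (hT : IsTriangulation A T) : degree T p = (starD A (tris A T) p).card := by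
  have h := hT.isTri ⟨p, hpint⟩
  rw [← h.card_link hgen hpint]
  have hinj : Set.InjOn (fun v : Plane => ({p, v} : Finset Plane)) (link A (tris A T) p) := by
    intro v hv v' hv' he
    have hv := (h.mem_link.1 hv).1
    beta_reduce at he
    have : v ∈ ({p, v'} : Finset Plane) := by rw [← he]; simp
    simpa [hv] using this
  rw [← Finset.card_image_of_injOn hinj, ← Set.ncard_coe_finset, degree, Nat.card_coe_set_eq]
  congr 1
  ext s
  simp only [Finset.coe_image, Set.mem_image, Finset.mem_coe, Set.mem_ofPred_eq]
  constructor
  · rintro ⟨hs, h2, hps⟩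
    obtain ⟨-, t, ht, hst⟩ := (hT.mem_faces_iff ⟨p, hpint⟩).1 hs
    obtain ⟨v, hv, hvp⟩ := Finset.exists_mem_ne (by omega : 1 < s.card) p
    refine ⟨v, h.mem_link.2 ⟨hvp, t, ht, hst hps, hst hv⟩, ?_⟩
    refine Finset.eq_of_subset_of_card_le ?_ ?_
    · intro x hx
      simp only [Finset.mem_insert, Finset.mem_singleton] at hx
      rcases hx with rfl | rfl <;> assumption
    · rw [h2, Finset.card_pair hvp.symm]
  · rintro ⟨v, hv, rfl⟩
    obtain ⟨hvp, t, ht, hpt, hvt⟩ := h.mem_link.1 hv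
    refine ⟨(hT.mem_faces_iff ⟨p, hpint⟩).2 ⟨by simp, t, ht, ?_⟩, Finset.card_pair hvp.symm,
      by simp⟩
    intro x hx
    simp only [Finset.mem_insert, Finset.mem_singleton] at hx
    rcases hx with rfl | rfl <;> assumption

lemma finite_triangulations {A : Finset Plane}
    (hint : (interior (convexHull ℝ (A : Set Plane))).Nonempty) :
    Finite {T : SimplicialComplex ℝ Plane | IsTriangulation A T} := by
  refine Finite.of_injective (β := (A.powerset.powerset : Finset (Finset (Finset Plane))))
    (fun T => ⟨tris A T.1, ?_⟩) ?_
  · rw [Finset.mem_powerset]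
    intro t ht
    exact Finset.mem_powerset.2 ((T.2.isTri hint).sub t ht)
  · rintro ⟨T₁, h₁⟩ ⟨T₂, h₂⟩ he
    exact Subtype.ext (tris_injOn hint h₁ h₂ (congrArg Subtype.val he))

theorem count_by_degree_interior_point
    (A : Finset Plane)
    (hgen : InGeneralPosition A)
    (hdim : affineSpan ℝ (A : Set Plane) = ⊤)
    (p : Plane) (hp : p ∈ A)
    (hpint : p ∈ interior (convexHull ℝ (A : Set Plane)))
    (i : ℕ) (hi : 3 ≤ i) :
    Nat.card {T : SimplicialComplex ℝ Plane | IsTriangulation A T ∧ degree T p = i}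
      ≤ (catalan (i - 1) - catalan (i - 2)) *
        Nat.card {T' : SimplicialComplex ℝ Plane | IsTriangulation (A.erase p) T'} := by
  obtain ⟨n, rfl⟩ := Nat.exists_eq_add_of_le' hi
  have hint : (interior (convexHull ℝ (A : Set Plane))).Nonempty := ⟨p, hpint⟩
  have hgen' : InGeneralPosition (A.erase p) := fun x hx y hy z hz =>
    hgen x (Finset.mem_of_mem_erase hx) y (Finset.mem_of_mem_erase hy) z
      (Finset.mem_of_mem_erase hz)
  have hcode : ∀ T : {T : SimplicialComplex ℝ Plane | IsTriangulation A T ∧ degree T p = n + 3},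
      ∃ (c : {T' : SimplicialComplex ℝ Plane | IsTriangulation (A.erase p) T'} × shapes n),
        Encodes A p (tris A T.1) (tris (A.erase p) c.1.1) c.2.1 := by
    rintro ⟨T, hT, hd⟩
    have h := hT.isTri hint
    obtain ⟨𝒯', τ, h', hn, e⟩ := exists_encodes hgen hp hpint n _ h
      (by rw [← degree_eq hgen hpint hT, hd])
    refine ⟨(⟨h'.toComplex hgen', h'.toComplex_isTriangulation hgen'⟩, ⟨τ, mem_shapes hn⟩), ?_⟩
    simpa only [h'.tris_toComplex hgen'] using e
  choose f hf using hcode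
  have hinj : Function.Injective f := by
    intro T₁ T₂ he
    have e₁ := hf T₁
    rw [he] at e₁
    exact Subtype.ext (tris_injOn hint T₁.2.1 T₂.2.1
      (e₁.eq hgen (T₁.2.1.isTri hint) (T₂.2.1.isTri hint) (hf T₂)))
  -- a triangulation counted on the left shows that `A.erase p` still spans the plane, whence
  -- its triangulations are finite in number and `Nat.card` is not a junk value
  rcases isEmpty_or_nonempty
    {T : SimplicialComplex ℝ Plane | IsTriangulation A T ∧ degree T p = n + 3} with hE | ⟨T, hT, hd⟩
  · simp
  have hint' : (interior (convexHull ℝ ((A.erase p : Finset Plane) : Set Plane))).Nonempty := by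
    have h := hT.isTri hint
    have hd' := degree_eq hgen hpint hT
    obtain ⟨𝒯', -, h', -⟩ := exists_encodes hgen hp hpint n _ h (by rw [← hd', hd])
    rw [hd, ← h.card_link hgen hpint] at hd'
    obtain ⟨v, hv⟩ : (link A (tris A T) p).Nonempty := Finset.card_pos.1 (by omega)
    obtain ⟨t, ht, -⟩ := h'.vert v
      (Finset.mem_erase.2 ⟨(h.mem_link.1 hv).1, (Finset.mem_filter.1 hv).1⟩)
    exact (interior_nonempty_of_card_three hgen' (h'.sub t ht) (h'.card t ht)).mono
      (interior_mono (convexHull_mono (Finset.coe_subset.2 (h'.sub t ht))))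
  have := finite_triangulations hint'
  calc _ ≤ Nat.card ({T' : SimplicialComplex ℝ Plane | IsTriangulation (A.erase p) T'} ×
        shapes n) := Nat.card_le_card_of_injective f hinj
    _ ≤ _ := by
      rw [Nat.card_prod, mul_comm, Nat.card_eq_fintype_card (α := shapes n), Fintype.card_coe]
      exact Nat.mul_le_mul_right _ (card_shapes_le n)
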